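/- arXiv:2605.14574 — 2 statements merged into one kernel-verified Lean document; each statement's English description precedes it below -/
import Mathlib

section
/- There exists a constant C > 0 such that for every integer m ≥ 2, the number of Markoff triples (a, b, c) of positive integers with a ≤ b ≤ c, a² + b² + c² = 3·a·b·c, and c = m is at most C·(log(log(3·m)))². -/
/-!
Put `N c = arcosh (3c / 2)`. If `a ≤ b ≤ c` is a Markoff triple, then `N c` is slightly smaller than
`N a + N b`, with an error of at most `1 / c²`. Labelling the vertices of the Markoff tree by
primitive vectors of `ℕ²` as in the Stern–Brocot tree, the largest entries thus give a function on
these vectors that, on the subtree below a triple with largest entry `c`, differs from a linear form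
by `O(n / c²)` at a vector of size `n`. On the other hand this function has a linear support that
touches it at a single vector, at every vector: it is strictly convex, as McShane and Rivin observed
for the stable norm of the punctured torus.

Three vectors with the same value `N m` are therefore not collinear, so that the triangle they span
has area at least `1 / 2`. Being of size `O(log m)`, they contradict the near linearity as soon as
`c` exceeds a multiple of `log m`. Hence `m` occurs at most twice below such a triple, and the tree
is covered by `O((log log m)²)` triples with smaller entries and the subtrees hanging from them.
-/

/-- A Markoff triple is a triple `(a, b, c)` of positive integers with
`a² + b² + c² = 3·a·b·c`. -/
def IsMarkoffTriple (t : ℕ × ℕ × ℕ) : Prop :=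
  0 < t.1 ∧ 0 < t.2.1 ∧ 0 < t.2.2 ∧
    t.1 ^ 2 + t.2.1 ^ 2 + t.2.2 ^ 2 = 3 * t.1 * t.2.1 * t.2.2

open Real

section Hyperbolic

theorem cosh_add_sub_mul_cosh_sub_sub {α β γ : ℝ}
    (h : cosh α ^ 2 + cosh β ^ 2 + cosh γ ^ 2 = 2 * cosh α * cosh β * cosh γ) :
    (cosh (α + β) - cosh γ) * (cosh γ - cosh (α - β)) = 1 := by
  rw [cosh_add, cosh_sub]
  linear_combination -h + sinh β ^ 2 * sinh_sq α + (cosh α ^ 2 - 1) * sinh_sq β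

theorem mul_sinh_le_cosh_add_sub_cosh {γ δ : ℝ} (hγ : 0 ≤ γ) (hδ : 0 ≤ δ) :
    δ * sinh γ ≤ cosh (γ + δ) - cosh γ := by
  have h₁ : cosh γ ≤ cosh γ * cosh δ := le_mul_of_one_le_right (cosh_pos γ).le (one_le_cosh δ)
  have h₂ : sinh γ * δ ≤ sinh γ * sinh δ :=
    mul_le_mul_of_nonneg_left (self_le_sinh_iff.2 hδ) (sinh_nonneg_iff.2 hγ)
  rw [cosh_add]
  linarith

theorem add_le_of_cosh_eq_exp_mul_cosh {α s θ : ℝ} (hα : 0 ≤ α) (hs : 0 ≤ s)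
    (h : cosh α = exp s * cosh θ) : θ + s ≤ α := by
  have hsinh : sinh θ * sinh s ≤ cosh θ * sinh s :=
    mul_le_mul_of_nonneg_right (sinh_lt_cosh θ).le (sinh_nonneg_iff.2 hs)
  have hcosh : cosh (θ + s) ≤ cosh α := by
    rw [h, cosh_add, ← cosh_add_sinh s]
    linarith
  exact (le_abs_self _).trans (abs_of_nonneg hα ▸ cosh_le_cosh.1 hcosh)

theorem cosh_add_add_self (θ ν : ℝ) :
    cosh (θ + ν + ν) = 2 * cosh ν * cosh (θ + ν) - cosh θ := by
  have h := cosh_sub (θ + ν) ν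
  rw [add_sub_cancel_right] at h
  rw [cosh_add (θ + ν), h]
  ring

end Hyperbolic

/-! ### Half lengths -/

/-- Half the length of a closed geodesic of trace `3 * c` on a hyperbolic surface. -/
noncomputable def halfLength (c : ℝ) : ℝ := arcosh (3 / 2 * c)

section HalfLength

variable {c : ℝ}

theorem cosh_halfLength (hc : 1 ≤ c) : cosh (halfLength c) = 3 / 2 * c :=
  cosh_arcosh (by linarith)

theorem halfLength_pos (hc : 1 ≤ c) : 0 < halfLength c :=
  arcosh_pos (by linarith)

theorem log_le_halfLength (hc : 1 ≤ c) : log (3 / 2 * c) ≤ halfLength c := by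
  rw [← cosh_halfLength hc, log_le_iff_le_exp (cosh_pos _), ← cosh_add_sinh]
  linarith [sinh_pos_iff.2 (halfLength_pos hc)]

theorem two_mul_log_two_le_log (hc : 2 ≤ c) : 2 * log 2 ≤ log (3 * c) := by
  rw [← log_rpow two_pos]
  exact log_le_log (by positivity) (by norm_num; linarith)

theorem half_log_le_halfLength (hc : 2 ≤ c) : log (3 * c) / 2 ≤ halfLength c := by
  have h : log (3 / 2 * c) = log (3 * c) - log 2 := by
    rw [← log_div (by positivity) two_ne_zero]
    congr 1
    ring
  linarith [log_le_halfLength (one_le_two.trans hc), two_mul_log_two_le_log hc]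

theorem add_le_halfLength {s θ : ℝ} (hc : 1 ≤ c) (hs : 0 ≤ s)
    (h : 3 / 2 * c = exp s * cosh θ) : θ + s ≤ halfLength c :=
  add_le_of_cosh_eq_exp_mul_cosh (halfLength_pos hc).le hs ((cosh_halfLength hc).trans h)

theorem four_thirds_mul_le_sinh_halfLength (hc : 2 ≤ c) : 4 / 3 * c ≤ sinh (halfLength c) := by
  have hc₁ : 1 ≤ c := one_le_two.trans hc
  have h := sinh_sq (halfLength c)
  rw [cosh_halfLength hc₁] at h
  refine abs_le_of_sq_le_sq' ?_ (sinh_pos_iff.2 (halfLength_pos hc₁)).le |>.2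
  nlinarith

end HalfLength

/-- The logarithm of `coth (halfLength c)`: the amount by which the half lengths in the fan of
triples around `c` exceed their common asymptotic linear form. -/
noncomputable def corner (c : ℝ) : ℝ := log (cosh (halfLength c) / sinh (halfLength c))

section Corner

variable {c : ℝ}

theorem exp_corner_mul_sinh (hc : 1 ≤ c) : exp (corner c) * sinh (halfLength c) = 3 / 2 * c := by
  have hsinh := sinh_pos_iff.2 (halfLength_pos hc)
  rw [corner, exp_log (div_pos (cosh_pos _) hsinh), div_mul_cancel₀ _ hsinh.ne', cosh_halfLength hc]

theorem one_div_sq_le_corner (hc : 1 ≤ c) : 1 / (4 * c) ^ 2 ≤ corner c := by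
  set ν := halfLength c
  have hC : cosh ν = 3 / 2 * c := cosh_halfLength hc
  have hS : 0 < sinh ν := sinh_pos_iff.2 (halfLength_pos hc)
  have hexp : 1 / (2 * cosh ν) ≤ exp (-ν) := by
    rw [exp_neg, ← one_div, ← cosh_add_sinh]
    exact one_div_le_one_div_of_le (by linarith [cosh_pos ν]) (by linarith [sinh_lt_cosh ν])
  calc 1 / (4 * c) ^ 2 ≤ 1 / (2 * cosh ν) / cosh ν := by
        rw [div_div]
        exact one_div_le_one_div_of_le (by rw [hC]; positivity) (by rw [hC]; nlinarith)
    _ ≤ exp (-ν) / cosh ν := div_le_div_of_nonneg_right hexp (cosh_pos ν).le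
    _ = 1 - (cosh ν / sinh ν)⁻¹ := by
        rw [inv_div, ← cosh_sub_sinh, sub_div, div_self (cosh_pos ν).ne']
    _ ≤ corner c := one_sub_inv_le_log_of_pos (div_pos (cosh_pos ν) hS)

theorem corner_pos (hc : 1 ≤ c) : 0 < corner c :=
  (by positivity : (0 : ℝ) < 1 / (4 * c) ^ 2).trans_le (one_div_sq_le_corner hc)

end Corner

/-! ### Farey vectors -/

/-- The vectors of the Stern–Brocot tree: the word `w` leads from the mediant `(1, 1)` of `(1, 0)`
and `(0, 1)` to a primitive vector, where `true` replaces `(0, 1)` by the mediant and `false`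
replaces `(1, 0)`. The head of the word is the first step from the root. -/
def fareyVector : List Bool → ℕ × ℕ
  | [] => (1, 1)
  | true :: w => ((fareyVector w).1 + (fareyVector w).2, (fareyVector w).2)
  | false :: w => ((fareyVector w).1, (fareyVector w).1 + (fareyVector w).2)

/-- The linear form with coefficients `x` and `y` on vectors of natural numbers. -/
def linForm (x y : ℝ) (v : ℕ × ℕ) : ℝ := x * v.1 + y * v.2

/-- The determinant of two vectors of natural numbers. -/
def latticeDet (u v : ℕ × ℕ) : ℤ := u.1 * v.2 - u.2 * v.1

/-- Twice the signed area of the triangle with vertices `u`, `v` and `w`. -/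
def latticeArea (u v w : ℕ × ℕ) : ℤ := latticeDet u v + latticeDet v w + latticeDet w u

section FareyVector

theorem fareyVector_pos (w : List Bool) : 0 < (fareyVector w).1 ∧ 0 < (fareyVector w).2 := by
  induction w with
  | nil => exact ⟨one_pos, one_pos⟩
  | cons d w ih => cases d <;> simp only [fareyVector] <;> omega

theorem fareyVector_map_not (w : List Bool) :
    fareyVector (w.map not) = (fareyVector w).swap := by
  induction w with
  | nil => rfl
  | cons d w ih => cases d <;> simp [fareyVector, ih, add_comm]

theorem linForm_nil (x y : ℝ) : linForm x y (fareyVector []) = x + y := by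
  simp [linForm, fareyVector]

theorem linForm_true_cons (x y : ℝ) (w : List Bool) :
    linForm x y (fareyVector (true :: w)) = linForm x (x + y) (fareyVector w) := by
  simp only [linForm, fareyVector]
  push_cast
  ring

theorem linForm_false_cons (x y : ℝ) (w : List Bool) :
    linForm x y (fareyVector (false :: w)) = linForm (x + y) y (fareyVector w) := by
  simp only [linForm, fareyVector]
  push_cast
  ring

theorem linForm_map_not (x y : ℝ) (w : List Bool) :
    linForm x y (fareyVector (w.map not)) = linForm y x (fareyVector w) := by
  simp only [linForm, fareyVector_map_not, Prod.fst_swap, Prod.snd_swap]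
  ring

theorem linForm_add (x y s t : ℝ) (v : ℕ × ℕ) :
    linForm (x + s) (y + t) v = linForm x y v + linForm s t v := by
  simp only [linForm]
  ring

theorem linForm_mono {x y x' y' : ℝ} (hx : x ≤ x') (hy : y ≤ y') (v : ℕ × ℕ) :
    linForm x y v ≤ linForm x' y' v := by
  simp only [linForm]
  gcongr

theorem latticeDet_cons_cons (d : Bool) (u v : List Bool) :
    latticeDet (fareyVector (d :: u)) (fareyVector (d :: v)) =
      latticeDet (fareyVector u) (fareyVector v) := by
  cases d <;> simp only [latticeDet, fareyVector] <;> push_cast <;> ring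

theorem latticeDet_true_false_pos (u v : List Bool) :
    0 < latticeDet (fareyVector (true :: u)) (fareyVector (false :: v)) := by
  have ⟨hu₁, hu₂⟩ := fareyVector_pos u
  have ⟨hv₁, hv₂⟩ := fareyVector_pos v
  simp only [latticeDet, fareyVector]
  push_cast
  zify at hu₁ hu₂ hv₁ hv₂
  nlinarith [mul_pos hu₁ hv₁, mul_pos hu₁ hv₂, mul_pos hu₂ hv₂]

theorem latticeDet_swap (u v : ℕ × ℕ) : latticeDet u v = -latticeDet v u := by
  simp only [latticeDet]
  ring

theorem latticeDet_ne_zero {u v : List Bool} (h : u ≠ v) :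
    latticeDet (fareyVector u) (fareyVector v) ≠ 0 := by
  induction u generalizing v with
  | nil =>
    cases v with
    | nil => exact absurd rfl h
    | cons e v =>
      have := fareyVector_pos v
      cases e <;> simp only [latticeDet, fareyVector] <;> push_cast <;> omega
  | cons d u ih =>
    cases v with
    | nil =>
      have := fareyVector_pos u
      cases d <;> simp only [latticeDet, fareyVector] <;> push_cast <;> omega
    | cons e v =>
      by_cases hde : d = e
      · subst hde
        rw [latticeDet_cons_cons]
        exact ih fun huv => h (huv ▸ rfl)
      · obtain ⟨rfl, rfl⟩ | ⟨rfl, rfl⟩ : d = true ∧ e = false ∨ d = false ∧ e = true := by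
          cases d <;> cases e <;> simp_all
        · exact (latticeDet_true_false_pos u v).ne'
        · exact latticeDet_swap _ _ ▸ neg_ne_zero.2 (latticeDet_true_false_pos v u).ne'

theorem fareyVector_injective : Function.Injective fareyVector := fun u v h => by
  by_contra huv
  apply latticeDet_ne_zero huv
  rw [h, latticeDet]
  ring

theorem latticeDet_mul_linForm_add (x y : ℝ) (u v w : ℕ × ℕ) :
    latticeDet v w * linForm x y u + latticeDet w u * linForm x y v
      + latticeDet u v * linForm x y w = 0 := by
  simp only [latticeDet, linForm]
  push_cast
  ring

theorem abs_latticeDet_le {u v : ℕ × ℕ} {n : ℝ} (hu : (u.1 + u.2 : ℝ) ≤ n)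
    (hv : (v.1 + v.2 : ℝ) ≤ n) : |(latticeDet u v : ℝ)| ≤ n ^ 2 := by
  have hu₁ : (0 : ℝ) ≤ u.1 := Nat.cast_nonneg _
  have hu₂ : (0 : ℝ) ≤ u.2 := Nat.cast_nonneg _
  have hv₁ : (0 : ℝ) ≤ v.1 := Nat.cast_nonneg _
  have hv₂ : (0 : ℝ) ≤ v.2 := Nat.cast_nonneg _
  have hmul : ((u.1 : ℝ) + u.2) * (v.1 + v.2) ≤ n * n := by gcongr; linarith
  simp only [latticeDet]
  push_cast
  rw [abs_le]
  constructor <;> nlinarith [mul_nonneg hu₁ hv₁, mul_nonneg hu₁ hv₂, mul_nonneg hu₂ hv₁,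
    mul_nonneg hu₂ hv₂]

theorem abs_latticeArea_mul_le {u v w : ℕ × ℕ} {n ε x y ℓ : ℝ} (hu : (u.1 + u.2 : ℝ) ≤ n)
    (hv : (v.1 + v.2 : ℝ) ≤ n) (hw : (w.1 + w.2 : ℝ) ≤ n) (hu_err : |linForm x y u - ℓ| ≤ ε)
    (hv_err : |linForm x y v - ℓ| ≤ ε) (hw_err : |linForm x y w - ℓ| ≤ ε) :
    |(latticeArea u v w : ℝ)| * |ℓ| ≤ 3 * (n ^ 2 * ε) := by
  have hdecomp : latticeArea u v w * ℓ = -(latticeDet v w * (linForm x y u - ℓ)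
      + latticeDet w u * (linForm x y v - ℓ) + latticeDet u v * (linForm x y w - ℓ)) := by
    rw [latticeArea]
    push_cast
    linear_combination latticeDet_mul_linForm_add x y u v w
  calc |(latticeArea u v w : ℝ)| * |ℓ|
      = |latticeDet v w * (linForm x y u - ℓ) + latticeDet w u * (linForm x y v - ℓ)
          + latticeDet u v * (linForm x y w - ℓ)| := by rw [← abs_mul, hdecomp, abs_neg]
    _ ≤ |latticeDet v w * (linForm x y u - ℓ)| + |latticeDet w u * (linForm x y v - ℓ)|
          + |latticeDet u v * (linForm x y w - ℓ)| := abs_add_three _ _ _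
    _ ≤ n ^ 2 * ε + n ^ 2 * ε + n ^ 2 * ε := by
        simp only [abs_mul]
        gcongr <;> exact abs_latticeDet_le ‹_› ‹_›
    _ = 3 * (n ^ 2 * ε) := by ring

end FareyVector

/-! ### The Markoff tree -/

/-- A Markoff triple with real entries, oriented as a vertex of the Markoff tree: `c` is the largest
entry, and the two children replace `b` or `a`. The condition `2 * a * b ≤ c` selects, among the two
roots of the Markoff equation in `c`, one from which the entries grow along the tree. -/
structure MarkoffNode where
  a : ℝ
  b : ℝ
  c : ℝ
  one_le_a : 1 ≤ a
  one_le_b : 1 ≤ b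
  two_mul_le : 2 * a * b ≤ c
  markoff_eq : a ^ 2 + b ^ 2 + c ^ 2 = 3 * a * b * c

namespace MarkoffNode

/-- The root `(1, 1, 2)` of the Markoff tree. -/
@[simps]
noncomputable def root : MarkoffNode where
  a := 1
  b := 1
  c := 2
  one_le_a := le_rfl
  one_le_b := le_rfl
  two_mul_le := by norm_num
  markoff_eq := by norm_num

variable (T : MarkoffNode)

theorem two_mul_a_le_c : 2 * T.a ≤ T.c := by
  nlinarith [T.one_le_a, T.one_le_b, T.two_mul_le]

theorem two_mul_b_le_c : 2 * T.b ≤ T.c := by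
  nlinarith [T.one_le_a, T.one_le_b, T.two_mul_le]

theorem two_le_c : 2 ≤ T.c := by
  linarith [T.one_le_a, T.two_mul_a_le_c]

/-- The mirror image of a node, which exchanges the roles of `a` and `b`. -/
@[simps]
def swap : MarkoffNode where
  a := T.b
  b := T.a
  c := T.c
  one_le_a := T.one_le_b
  one_le_b := T.one_le_a
  two_mul_le := by linarith [T.two_mul_le]
  markoff_eq := by linarith [T.markoff_eq]

/-- The child of a node that keeps `a`. -/
@[simps]
noncomputable def right : MarkoffNode where
  a := T.a
  b := T.c
  c := 3 * T.a * T.c - T.b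
  one_le_a := T.one_le_a
  one_le_b := by linarith [T.two_le_c]
  two_mul_le := by nlinarith [T.one_le_a, T.one_le_b, T.two_mul_b_le_c]
  markoff_eq := by linear_combination T.markoff_eq

/-- The child of a node that keeps `b`. -/
noncomputable def left : MarkoffNode := T.swap.right.swap

@[simp] theorem left_a : T.left.a = T.c := rfl

@[simp] theorem left_b : T.left.b = T.b := rfl

@[simp] theorem left_c : T.left.c = 3 * T.b * T.c - T.a := rfl

/-- The node reached by the steps of a word, where `true` leads to the right child and `false` to
the left child. The head of the word is the first step. -/
noncomputable def descendant (T : MarkoffNode) : List Bool → MarkoffNode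
  | [] => T
  | true :: w => T.right.descendant w
  | false :: w => T.left.descendant w

theorem descendant_append (u v : List Bool) :
    T.descendant (u ++ v) = (T.descendant u).descendant v := by
  induction u generalizing T with
  | nil => rfl
  | cons d u ih => cases d <;> exact ih _

theorem swap_descendant_map_not (w : List Bool) :
    T.swap.descendant (w.map not) = (T.descendant w).swap := by
  induction w generalizing T with
  | nil => rfl
  | cons d w ih =>
    cases d
    · exact ih T.left
    · exact ih T.right

theorem one_le_c : 1 ≤ T.c := one_le_two.trans T.two_le_c

theorem cosh_halfLength_add_sub_mul :
    (cosh (halfLength T.a + halfLength T.b) - 3 / 2 * T.c)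
      * (3 / 2 * T.c - cosh (halfLength T.a - halfLength T.b)) = 1 := by
  have ha := cosh_halfLength T.one_le_a
  have hb := cosh_halfLength T.one_le_b
  have hc := cosh_halfLength T.one_le_c
  have h := cosh_add_sub_mul_cosh_sub_sub (α := halfLength T.a) (β := halfLength T.b)
    (γ := halfLength T.c) (by rw [ha, hb, hc]; linear_combination 9 / 4 * T.markoff_eq)
  rw [hc] at h
  linear_combination h

theorem cosh_halfLength_sub_le :
    cosh (halfLength T.a - halfLength T.b) ≤ 3 / 4 * T.c := by
  have ha := (halfLength_pos T.one_le_a).le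
  have hb := (halfLength_pos T.one_le_b).le
  rcases le_total (halfLength T.b) (halfLength T.a) with h | h
  · have : cosh (halfLength T.a - halfLength T.b) ≤ cosh (halfLength T.a) := by
      rw [cosh_le_cosh, abs_of_nonneg ha, abs_of_nonneg (sub_nonneg.2 h)]
      linarith
    linarith [cosh_halfLength T.one_le_a, T.two_mul_a_le_c]
  · have : cosh (halfLength T.a - halfLength T.b) ≤ cosh (halfLength T.b) := by
      rw [cosh_le_cosh, abs_of_nonneg hb, abs_of_nonpos (sub_nonpos.2 h)]
      linarith
    linarith [cosh_halfLength T.one_le_b, T.two_mul_b_le_c]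

theorem cosh_halfLength_add_sub_mem_Ioc :
    cosh (halfLength T.a + halfLength T.b) - 3 / 2 * T.c ∈ Set.Ioc 0 (4 / (3 * T.c)) := by
  have hc := T.two_le_c
  have h₁ := T.cosh_halfLength_add_sub_mul
  have h₂ := T.cosh_halfLength_sub_le
  have hpos : 0 < cosh (halfLength T.a + halfLength T.b) - 3 / 2 * T.c :=
    pos_of_mul_pos_left (h₁ ▸ one_pos) (by linarith)
  refine ⟨hpos, ?_⟩
  rw [le_div_iff₀ (by linarith)]
  nlinarith

theorem halfLength_c_lt : halfLength T.c < halfLength T.a + halfLength T.b := by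
  have ha := halfLength_pos T.one_le_a
  have hb := halfLength_pos T.one_le_b
  have hc := halfLength_pos T.one_le_c
  have h := T.cosh_halfLength_add_sub_mem_Ioc.1
  have : cosh (halfLength T.c) < cosh (halfLength T.a + halfLength T.b) := by
    linarith [cosh_halfLength T.one_le_c]
  rwa [cosh_lt_cosh, abs_of_pos hc, abs_of_pos (by linarith)] at this

theorem halfLength_add_le :
    halfLength T.a + halfLength T.b ≤ halfLength T.c + 1 / T.c ^ 2 := by
  have hc : 0 < T.c := by linarith [T.two_le_c]
  set δ := halfLength T.a + halfLength T.b - halfLength T.c with hδ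
  have hδ₀ : 0 ≤ δ := sub_nonneg.2 T.halfLength_c_lt.le
  have h₁ : δ * sinh (halfLength T.c) ≤ 4 / (3 * T.c) := by
    refine (mul_sinh_le_cosh_add_sub_cosh (halfLength_pos T.one_le_c).le hδ₀).trans ?_
    rw [cosh_halfLength T.one_le_c, hδ, add_sub_cancel]
    linarith [T.cosh_halfLength_add_sub_mem_Ioc.2]
  have h₂ : δ * (4 / 3 * T.c) ≤ 4 / (3 * T.c) :=
    (mul_le_mul_of_nonneg_left (four_thirds_mul_le_sinh_halfLength T.two_le_c) hδ₀).trans h₁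
  have h₃ : δ ≤ 1 / T.c ^ 2 := by
    rw [le_div_iff₀ (by positivity)] at h₂ ⊢
    linarith
  linarith

theorem c_le_right_c : T.c ≤ T.right.c := by
  have h := T.right.two_mul_b_le_c
  rw [right_b] at h
  linarith [T.two_le_c]

theorem c_le_left_c : T.c ≤ T.left.c := T.swap.c_le_right_c

theorem halfLength_descendant_le_linForm (w : List Bool) :
    halfLength (T.descendant w).c ≤
      linForm (halfLength T.a) (halfLength T.b) (fareyVector w) := by
  induction w generalizing T with
  | nil => exact linForm_nil _ _ ▸ T.halfLength_c_lt.le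
  | cons d w ih =>
    cases d
    · rw [linForm_false_cons]
      exact (ih T.left).trans (linForm_mono T.halfLength_c_lt.le le_rfl _)
    · rw [linForm_true_cons]
      exact (ih T.right).trans (linForm_mono le_rfl T.halfLength_c_lt.le _)

theorem linForm_le_halfLength_descendant_add {s : ℝ} (hs : 1 / T.c ^ 2 ≤ s) (w : List Bool) :
    linForm (halfLength T.a) (halfLength T.b) (fareyVector w) ≤
      halfLength (T.descendant w).c + ((fareyVector w).1 + (fareyVector w).2 - 1) * s := by
  induction w generalizing T with
  | nil =>
    have := T.halfLength_add_le
    simp only [linForm, fareyVector, descendant, Nat.cast_one]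
    linarith
  | cons d w ih =>
    have hc : 0 < T.c := by linarith [T.two_le_c]
    have hsum : halfLength T.a + halfLength T.b ≤ halfLength T.c + s :=
      T.halfLength_add_le.trans (by gcongr)
    cases d
    · have h₁ := linForm_mono hsum (add_zero (halfLength T.b)).ge (fareyVector w)
      have h₂ := ih T.left (le_trans (by gcongr; exact T.c_le_left_c) hs)
      rw [linForm_false_cons]
      rw [linForm_add] at h₁
      simp only [fareyVector, descendant, linForm, left_a, left_b] at *
      push_cast
      linarith
    · have h₁ := linForm_mono (add_zero (halfLength T.a)).ge hsum (fareyVector w)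
      have h₂ := ih T.right (le_trans (by gcongr; exact T.c_le_right_c) hs)
      rw [linForm_true_cons]
      rw [linForm_add] at h₁
      simp only [fareyVector, descendant, linForm, right_a, right_b] at *
      push_cast
      linarith

theorem linForm_add_le_halfLength_descendant {x y s : ℝ} (hs : 1 / T.c ^ 2 ≤ s)
    (hx : x + s ≤ halfLength T.a) (hy : y + s ≤ halfLength T.b) (w : List Bool) :
    linForm x y (fareyVector w) + s ≤ halfLength (T.descendant w).c := by
  have h₁ := linForm_mono hx hy (fareyVector w)
  have h₂ := T.linForm_le_halfLength_descendant_add hs w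
  rw [linForm_add] at h₁
  simp only [linForm] at *
  linarith

/-! ### Supporting linear forms -/

theorem four_mul_b_le_right_c : 4 * T.b ≤ T.right.c := by
  have := T.right.two_mul_b_le_c
  have := T.two_mul_b_le_c
  rw [right_b] at *
  linarith

variable {T} in
-- Along the fan of triples around `b`, the largest entry is proportional to `cosh (θ + k * ν)` with
-- `ν = halfLength b`; the branches that leave the fan fall under the near linearity.
theorem linForm_add_corner_le {θ : ℝ}
    (ha : 3 / 2 * T.a = exp (corner T.b) * cosh θ)
    (hc : 3 / 2 * T.c = exp (corner T.b) * cosh (θ + halfLength T.b)) (w : List Bool) :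
    linForm θ (halfLength T.b) (fareyVector w) + corner T.b ≤ halfLength (T.descendant w).c := by
  have hs := (corner_pos T.one_le_b).le
  induction w generalizing T θ with
  | nil =>
    rw [linForm_nil]
    exact add_le_halfLength T.one_le_c hs hc
  | cons d w ih =>
    cases d
    · rw [linForm_false_cons]
      refine ih (T := T.left) hc ?_ hs
      rw [left_b, left_c, cosh_add_add_self, cosh_halfLength T.one_le_b]
      linear_combination 3 * T.b * hc - ha
    · rw [linForm_true_cons]
      refine T.right.linForm_add_le_halfLength_descendant ?_
        (add_le_halfLength T.one_le_a hs ha) (add_le_halfLength T.one_le_c hs hc) w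
      have hb := T.one_le_b
      refine le_trans ?_ (one_div_sq_le_corner hb)
      gcongr
      exact T.four_mul_b_le_right_c

theorem exists_exp_corner_mul_cosh :
    ∃ θ, 3 / 2 * T.a = exp (corner T.c) * cosh θ ∧
      3 / 2 * T.b = exp (corner T.c) * cosh (halfLength T.c - θ) := by
  have hC := cosh_halfLength T.one_le_c
  have hE := exp_corner_mul_sinh T.one_le_c
  set ν := halfLength T.c
  have hS : 0 < sinh ν := sinh_pos_iff.2 (halfLength_pos T.one_le_c)
  have hc : 0 < T.c := by linarith [T.two_le_c]
  set θ := arsinh (3 / 2 * T.a - T.b / T.c) with hθ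
  have hsinh : sinh θ * T.c = 3 / 2 * T.a * T.c - T.b := by
    rw [hθ, sinh_arsinh]
    field_simp
  have hcosh : cosh θ * T.c = T.a * sinh ν := by
    have hsq : (cosh θ * T.c) ^ 2 = (T.a * sinh ν) ^ 2 := by
      rw [mul_pow, mul_pow, cosh_sq θ, sinh_sq ν, hC]
      linear_combination (sinh θ * T.c + 3 / 2 * T.a * T.c - T.b) * hsinh + T.markoff_eq
    have ha : 0 ≤ T.a := zero_le_one.trans T.one_le_a
    exact (pow_left_inj₀ (by positivity) (by positivity) two_ne_zero).1 hsq
  refine ⟨θ, mul_right_cancel₀ hc.ne' ?_, mul_right_cancel₀ hc.ne' ?_⟩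
  · linear_combination -exp (corner T.c) * hcosh - T.a * hE
  · rw [cosh_sub, hC]
    linear_combination exp (corner T.c) * sinh ν * hsinh
      - exp (corner T.c) * (3 / 2 * T.c) * hcosh - T.b * hE

/-- A linear form on Farey vectors that is bounded by the half lengths of the entries of the
descendants of `T` and touches them exactly at the word `w`. -/
structure IsSupport (T : MarkoffNode) (w : List Bool) (x y : ℝ) : Prop where
  lt_a : x < halfLength T.a
  lt_b : y < halfLength T.b
  eq_c : linForm x y (fareyVector w) = halfLength (T.descendant w).c
  lt_c : ∀ u ≠ w, linForm x y (fareyVector u) < halfLength (T.descendant u).c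

theorem linForm_true_cons_lt {θ : ℝ} (ha : 3 / 2 * T.a = exp (corner T.c) * cosh θ)
    (hb : 3 / 2 * T.b = exp (corner T.c) * cosh (halfLength T.c - θ)) (w : List Bool) :
    linForm θ (halfLength T.c - θ) (fareyVector (true :: w)) <
      halfLength (T.descendant (true :: w)).c := by
  have hc : 3 / 2 * T.right.c = exp (corner T.c) * cosh (θ + halfLength T.c) := by
    have h := cosh_add_add_self (θ - halfLength T.c) (halfLength T.c)
    rw [sub_add_cancel, ← cosh_neg (θ - _), neg_sub, cosh_halfLength T.one_le_c] at h
    rw [h, right_c]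
    linear_combination 3 * T.c * ha - hb
  have h := linForm_add_corner_le (T := T.right) ha hc w
  rw [linForm_true_cons, add_sub_cancel]
  exact (lt_add_of_pos_right _ (corner_pos T.one_le_c)).trans_le h

theorem exists_isSupport_nil : ∃ x y, T.IsSupport [] x y := by
  obtain ⟨θ, ha, hb⟩ := T.exists_exp_corner_mul_cosh
  have hs := corner_pos T.one_le_c
  refine ⟨θ, halfLength T.c - θ, ?_, ?_, ?_, ?_⟩
  · linarith [add_le_halfLength T.one_le_a hs.le ha]
  · linarith [add_le_halfLength T.one_le_b hs.le hb]
  · rw [linForm_nil, add_sub_cancel, descendant]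
  · rintro (_ | ⟨_ | _, w⟩) hw
    · exact absurd rfl hw
    · have h := T.swap.linForm_true_cons_lt hb (by rwa [swap_b, swap_c, sub_sub_cancel])
        (w.map not)
      rw [swap_c, sub_sub_cancel] at h
      have hnot : true :: w.map not = (false :: w).map not := rfl
      rwa [hnot, linForm_map_not, swap_descendant_map_not, swap_c] at h
    · exact T.linForm_true_cons_lt ha hb w

section IsSupport

variable {T} {w : List Bool} {x y x₀ y₀ : ℝ}

theorem IsSupport.swap (h : T.IsSupport w x y) : T.swap.IsSupport (w.map not) y x where
  lt_a := h.lt_b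
  lt_b := h.lt_a
  eq_c := by rw [linForm_map_not, swap_descendant_map_not, h.eq_c, swap_c]
  lt_c u hu := by
    obtain ⟨u, rfl⟩ := Bool.involutive_not.list_map.surjective u
    rw [linForm_map_not, swap_descendant_map_not, swap_c]
    exact h.lt_c u fun huw => hu (huw ▸ rfl)

theorem IsSupport.right (h₀ : T.IsSupport [] x₀ y₀) (h : T.right.IsSupport w x y) :
    T.IsSupport (true :: w) x (y - x) := by
  have eq_c : linForm x (y - x) (fareyVector (true :: w)) =
      halfLength (T.descendant (true :: w)).c := by
    rw [linForm_true_cons, add_sub_cancel]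
    exact h.eq_c
  have hnil : x₀ + y₀ = halfLength T.c := linForm_nil x₀ y₀ ▸ h₀.eq_c
  have hy : y < x₀ + y₀ := hnil ▸ h.lt_b
  have hx : x₀ < x := by
    have hlt := h₀.lt_c (true :: w) (List.cons_ne_nil _ _)
    rw [← eq_c, linForm_true_cons, linForm_true_cons, add_sub_cancel] at hlt
    by_contra! hle
    exact hlt.not_ge (linForm_mono hle hy.le _)
  refine ⟨h.lt_a, by linarith [h₀.lt_b], eq_c, ?_⟩
  rintro (_ | ⟨_ | _, u⟩) hu
  · rw [linForm_nil, add_sub_cancel]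
    exact h.lt_b
  · refine (h₀.lt_c _ (List.cons_ne_nil _ _)).trans_le' ?_
    rw [linForm_false_cons, linForm_false_cons]
    exact linForm_mono (by linarith) (by linarith) _
  · rw [linForm_true_cons, add_sub_cancel]
    exact h.lt_c u fun huw => hu (huw ▸ rfl)

theorem IsSupport.left (h₀ : T.IsSupport [] x₀ y₀) (h : T.left.IsSupport w x y) :
    T.IsSupport (false :: w) (x - y) y := by
  have := (IsSupport.right h₀.swap (w := w.map not) h.swap).swap
  rwa [List.map_cons, Bool.involutive_not.list_map w] at this

variable (T) in
theorem exists_isSupport (w : List Bool) : ∃ x y, T.IsSupport w x y := by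
  induction w generalizing T with
  | nil => exact T.exists_isSupport_nil
  | cons d w ih =>
    obtain ⟨x₀, y₀, h₀⟩ := T.exists_isSupport_nil
    cases d
    · obtain ⟨x, y, h⟩ := ih T.left
      exact ⟨_, _, h₀.left h⟩
    · obtain ⟨x, y, h⟩ := ih T.right
      exact ⟨_, _, h₀.right h⟩

end IsSupport

/-! ### Counting nodes with a given largest entry -/

/-- The words whose descendant of `T` has largest entry `m`. -/
def fiber (T : MarkoffNode) (m : ℝ) : Set (List Bool) := {w | (T.descendant w).c = m}

section Fiber

variable {T} {u v w : List Bool} {m : ℝ}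

-- The support at `u` is smaller at both `v` and `w`, so `u` does not lie between them on a line.
theorem latticeDet_mul_latticeDet_neg (hu : u ∈ T.fiber m) (hv : v ∈ T.fiber m)
    (hw : w ∈ T.fiber m) (huv : u ≠ v) (hwu : w ≠ u)
    (harea : latticeArea (fareyVector u) (fareyVector v) (fareyVector w) = 0) :
    latticeDet (fareyVector w) (fareyVector u) *
      latticeDet (fareyVector u) (fareyVector v) < 0 := by
  obtain ⟨x, y, h⟩ := T.exists_isSupport u
  have hLu : linForm x y (fareyVector u) = halfLength m := hu ▸ h.eq_c
  have hLv : linForm x y (fareyVector v) < halfLength m := hv ▸ h.lt_c v huv.symm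
  have hLw : linForm x y (fareyVector w) < halfLength m := hw ▸ h.lt_c w hwu
  have hlin := latticeDet_mul_linForm_add x y (fareyVector u) (fareyVector v) (fareyVector w)
  have hsum : (latticeDet (fareyVector u) (fareyVector v) : ℝ)
      + latticeDet (fareyVector v) (fareyVector w)
      + latticeDet (fareyVector w) (fareyVector u) = 0 := mod_cast harea
  have huv₀ : (latticeDet (fareyVector u) (fareyVector v) : ℝ) ≠ 0 :=
    mod_cast latticeDet_ne_zero huv
  rify
  set q := (latticeDet (fareyVector w) (fareyVector u) : ℝ)
  set r := (latticeDet (fareyVector u) (fareyVector v) : ℝ)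
  by_contra! hqr
  have hbalance : q * r * (halfLength m - linForm x y (fareyVector v))
      + r ^ 2 * (halfLength m - linForm x y (fareyVector w)) = 0 := by
    linear_combination r * halfLength m * hsum - r * hlin
      + r * latticeDet (fareyVector v) (fareyVector w) * hLu
  have hv_nonneg := mul_nonneg hqr (sub_pos.2 hLv).le
  have hw_pos := mul_pos (by positivity : 0 < r ^ 2) (sub_pos.2 hLw)
  linarith

theorem latticeArea_ne_zero (hu : u ∈ T.fiber m) (hv : v ∈ T.fiber m) (hw : w ∈ T.fiber m)
    (huv : u ≠ v) (hvw : v ≠ w) (hwu : w ≠ u) :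
    latticeArea (fareyVector u) (fareyVector v) (fareyVector w) ≠ 0 := by
  intro h
  have h₁ := latticeDet_mul_latticeDet_neg hu hv hw huv hwu h
  have h₂ := latticeDet_mul_latticeDet_neg hv hw hu hvw huv (by rw [← h]; unfold latticeArea; ring)
  have h₃ := latticeDet_mul_latticeDet_neg hw hu hv hwu hvw (by rw [← h]; unfold latticeArea; ring)
  have h₁₂ := mul_pos_of_neg_of_neg h₁ h₂
  have h₃' := mul_nonpos_of_nonneg_of_nonpos
    (sq_nonneg (latticeDet (fareyVector u) (fareyVector v))) h₃.le
  linarith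

variable (T) in
theorem linForm_log_le_log (w : List Bool) :
    linForm (log (2 * T.a)) (log (2 * T.b)) (fareyVector w) ≤ log (2 * (T.descendant w).c) := by
  have hsum (T : MarkoffNode) : log (2 * T.a) + log (2 * T.b) ≤ log (2 * T.c) := by
    have ha := T.one_le_a
    have hb := T.one_le_b
    rw [← log_mul (by positivity) (by positivity)]
    exact log_le_log (by positivity) (by linarith [T.two_mul_le])
  induction w generalizing T with
  | nil => exact linForm_nil _ _ ▸ hsum T
  | cons d w ih =>
    cases d
    · rw [linForm_false_cons]
      exact (linForm_mono (hsum T) le_rfl _).trans (ih T.left)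
    · rw [linForm_true_cons]
      exact (linForm_mono le_rfl (hsum T) _).trans (ih T.right)

theorem fareyVector_add_le_logb (hw : w ∈ T.fiber m) :
    ((fareyVector w).1 + (fareyVector w).2 : ℝ) ≤ logb 2 (2 * m) := by
  have ha : log 2 ≤ log (2 * T.a) := log_le_log two_pos (by linarith [T.one_le_a])
  have hb : log 2 ≤ log (2 * T.b) := log_le_log two_pos (by linarith [T.one_le_b])
  have h := (linForm_mono ha hb _).trans (T.linForm_log_le_log w)
  rw [logb, le_div_iff₀ (log_pos one_lt_two), ← hw]
  unfold linForm at h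
  linarith

theorem abs_linForm_sub_halfLength_le (hw : w ∈ T.fiber m) :
    |linForm (halfLength T.a) (halfLength T.b) (fareyVector w) - halfLength m| ≤
      logb 2 (2 * m) / T.c ^ 2 := by
  have hlower := T.halfLength_descendant_le_linForm w
  have hupper := T.linForm_le_halfLength_descendant_add le_rfl w
  rw [hw.out] at hlower hupper
  rw [abs_of_nonneg (sub_nonneg.2 hlower), div_eq_mul_one_div, sub_le_iff_le_add']
  refine hupper.trans ?_
  gcongr
  linarith [fareyVector_add_le_logb hw]

theorem halfLength_le_of_fiber (hu : u ∈ T.fiber m) (hv : v ∈ T.fiber m) (hw : w ∈ T.fiber m)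
    (huv : u ≠ v) (hvw : v ≠ w) (hwu : w ≠ u) :
    halfLength m ≤ 3 * logb 2 (2 * m) ^ 3 / T.c ^ 2 := by
  have harea : (1 : ℝ) ≤ |(latticeArea (fareyVector u) (fareyVector v) (fareyVector w) : ℝ)| :=
    mod_cast Int.one_le_abs (latticeArea_ne_zero hu hv hw huv hvw hwu)
  calc halfLength m ≤ |halfLength m| := le_abs_self _
    _ ≤ |(latticeArea (fareyVector u) (fareyVector v) (fareyVector w) : ℝ)| * |halfLength m| :=
        le_mul_of_one_le_left (abs_nonneg _) harea
    _ ≤ 3 * (logb 2 (2 * m) ^ 2 * (logb 2 (2 * m) / T.c ^ 2)) :=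
        abs_latticeArea_mul_le (fareyVector_add_le_logb hu) (fareyVector_add_le_logb hv)
          (fareyVector_add_le_logb hw) (abs_linForm_sub_halfLength_le hu)
          (abs_linForm_sub_halfLength_le hv) (abs_linForm_sub_halfLength_le hw)
    _ = 3 * logb 2 (2 * m) ^ 3 / T.c ^ 2 := by ring

theorem ncard_fiber_le_two (hT : 7 * log (3 * m) < T.c) : (T.fiber m).ncard ≤ 2 := by
  by_contra! hcard
  obtain ⟨u, hu, v, hv, w, hw, huv, huw, hvw⟩ :=
    (Set.two_lt_ncard (Set.finite_of_ncard_pos (by omega))).1 hcard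
  have hm : 2 ≤ m := hu ▸ (T.descendant u).two_le_c
  have hR : 0 < log (3 * m) := log_pos (by linarith)
  have hn : logb 2 (2 * m) ≤ 2 * log (3 * m) := by
    have h : log (2 * m) ≤ log (3 * m) := log_le_log (by positivity) (by linarith)
    rw [logb, div_le_iff₀ (log_pos one_lt_two)]
    nlinarith [log_two_gt_d9]
  have hn₀ : 0 ≤ logb 2 (2 * m) := logb_nonneg one_lt_two (by linarith)
  have h₁ : log (3 * m) / 2 ≤ 3 * logb 2 (2 * m) ^ 3 / T.c ^ 2 :=
    (half_log_le_halfLength hm).trans (halfLength_le_of_fiber hu hv hw huv hvw huw.symm)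
  have h₂ : 3 * logb 2 (2 * m) ^ 3 / T.c ^ 2 ≤
      3 * (2 * log (3 * m)) ^ 3 / (7 * log (3 * m)) ^ 2 := by
    gcongr
  have h₃ : 3 * (2 * log (3 * m)) ^ 3 / (7 * log (3 * m)) ^ 2 = 24 / 49 * log (3 * m) := by
    field_simp
    norm_num
  linarith

end Fiber

section Frontier

variable {T} {w : List Bool} {m τ : ℝ}

theorem fareyVector_mem_Icc (hw : (T.descendant w).c ≤ τ) :
    fareyVector w ∈ (Finset.Icc 1 ⌊logb 2 (2 * τ)⌋₊ ×ˢ Finset.Icc 1 ⌊logb 2 (2 * τ)⌋₊) := by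
  have hc := (T.descendant w).two_le_c
  have hlog : ((fareyVector w).1 + (fareyVector w).2 : ℝ) ≤ logb 2 (2 * τ) :=
    (fareyVector_add_le_logb rfl).trans
      (logb_le_logb_of_le one_lt_two (by positivity) (by linarith))
  have hfloor : (fareyVector w).1 + (fareyVector w).2 ≤ ⌊logb 2 (2 * τ)⌋₊ :=
    Nat.le_floor (mod_cast hlog)
  have hpos := fareyVector_pos w
  simp only [Finset.mem_product, Finset.mem_Icc]
  omega

variable (T τ) in
theorem finite_setOf_descendant_c_le : {w | (T.descendant w).c ≤ τ}.Finite :=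
  Set.Finite.of_injOn (fun _ hw => fareyVector_mem_Icc hw) fareyVector_injective.injOn
    (Finset.finite_toSet _)

variable (T τ) in
theorem ncard_setOf_descendant_c_le :
    {w | (T.descendant w).c ≤ τ}.ncard ≤ ⌊logb 2 (2 * τ)⌋₊ ^ 2 := by
  have h := Set.ncard_le_ncard_of_injOn fareyVector (s := {w | (T.descendant w).c ≤ τ})
    (fun _ hw => fareyVector_mem_Icc hw) fareyVector_injective.injOn (Finset.finite_toSet _)
  rwa [Set.ncard_coe_finset, Finset.card_product, Nat.card_Icc, Nat.add_sub_cancel, ← sq] at h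

/-- The words at which the largest entries of the descendants of `T` first exceed `τ`. -/
def frontier (T : MarkoffNode) (τ : ℝ) : Set (List Bool) :=
  {u | τ < (T.descendant u).c ∧ ∃ v d, u = v ++ [d] ∧ (T.descendant v).c ≤ τ}

theorem exists_prefix_mem_frontier (hT : T.c ≤ τ) (hw : τ < (T.descendant w).c) :
    ∃ u ∈ T.frontier τ, u <+: w := by
  induction w generalizing T with
  | nil => exact absurd hT hw.not_ge
  | cons d w ih =>
    by_cases hd : τ < (T.descendant [d]).c
    · exact ⟨[d], ⟨hd, [], d, rfl, hT⟩, w, rfl⟩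
    · rw [← List.singleton_append, descendant_append] at hw
      obtain ⟨_, ⟨hu, v, e, rfl, hv⟩, huw⟩ := ih (not_lt.1 hd) hw
      rw [← descendant_append] at hu hv
      exact ⟨d :: (v ++ [e]), ⟨hu, d :: v, e, rfl, hv⟩, List.cons_prefix_cons.2 ⟨rfl, huw⟩⟩

theorem frontier_subset_image : T.frontier τ ⊆
    (fun p : List Bool × Bool => p.1 ++ [p.2]) '' ({v | (T.descendant v).c ≤ τ} ×ˢ Set.univ) := by
  rintro _ ⟨-, v, d, rfl, hv⟩
  exact ⟨(v, d), ⟨hv, Set.mem_univ d⟩, rfl⟩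

variable (T τ) in
theorem finite_frontier : (T.frontier τ).Finite :=
  (((T.finite_setOf_descendant_c_le τ).prod Set.finite_univ).image _).subset frontier_subset_image

variable (T τ) in
theorem ncard_frontier_le : (T.frontier τ).ncard ≤ 2 * ⌊logb 2 (2 * τ)⌋₊ ^ 2 := by
  have hfin := (T.finite_setOf_descendant_c_le τ).prod (Set.finite_univ (α := Bool))
  calc (T.frontier τ).ncard
      ≤ ({v | (T.descendant v).c ≤ τ} ×ˢ (Set.univ : Set Bool)).ncard :=
        (Set.ncard_le_ncard frontier_subset_image (hfin.image _)).trans (Set.ncard_image_le hfin)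
    _ = {v | (T.descendant v).c ≤ τ}.ncard * 2 := by
        rw [Set.ncard_prod, Set.ncard_univ, Nat.card_eq_fintype_card, Fintype.card_bool]
    _ ≤ 2 * ⌊logb 2 (2 * τ)⌋₊ ^ 2 := by
        linarith [T.ncard_setOf_descendant_c_le τ]

theorem ncard_fiber_prefix_le_two {u : List Bool} (hu : 7 * log (3 * m) < (T.descendant u).c) :
    {w ∈ T.fiber m | u <+: w}.ncard ≤ 2 := by
  have h : {w ∈ T.fiber m | u <+: w} = (u ++ ·) '' (T.descendant u).fiber m := by
    ext w
    constructor
    · rintro ⟨hw, r, rfl⟩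
      exact ⟨r, (congrArg c (T.descendant_append u r)).symm.trans hw, rfl⟩
    · rintro ⟨r, hr, rfl⟩
      exact ⟨(congrArg c (T.descendant_append u r)).trans hr, List.prefix_append u r⟩
  rw [h, Set.ncard_image_of_injective _ (List.append_right_injective u)]
  exact ncard_fiber_le_two hu

theorem ncard_fiber_le (hT : T.c ≤ 7 * log (3 * m)) :
    (T.fiber m).ncard ≤ 4 * ⌊logb 2 (2 * (7 * log (3 * m)))⌋₊ ^ 2 := by
  set τ := 7 * log (3 * m)
  rcases le_or_gt m τ with hm | hm
  · have hle : (T.fiber m).ncard ≤ {w | (T.descendant w).c ≤ τ}.ncard :=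
      Set.ncard_le_ncard (fun w hw => hw.out.trans_le hm) (T.finite_setOf_descendant_c_le τ)
    linarith [T.ncard_setOf_descendant_c_le τ]
  · have hfiber : T.fiber m = ⋃ u ∈ (T.finite_frontier τ).toFinset, {w ∈ T.fiber m | u <+: w} := by
      ext w
      simp only [Set.mem_iUnion, Set.Finite.mem_toFinset, Set.mem_ofPred_eq, exists_prop]
      constructor
      · intro hw
        obtain ⟨u, hu, huw⟩ := exists_prefix_mem_frontier hT (hm.trans_eq hw.out.symm)
        exact ⟨u, hu, hw, huw⟩
      · rintro ⟨u, -, hw, -⟩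
        exact hw
    calc (T.fiber m).ncard
        ≤ ∑ u ∈ (T.finite_frontier τ).toFinset, {w ∈ T.fiber m | u <+: w}.ncard := by
          conv_lhs => rw [hfiber]
          exact Finset.set_ncard_biUnion_le _ _
      _ ≤ (T.finite_frontier τ).toFinset.card • 2 :=
          Finset.sum_le_card_nsmul _ _ _ fun u hu =>
            ncard_fiber_prefix_le_two ((Set.Finite.mem_toFinset _).1 hu).1
      _ = 2 * (T.frontier τ).ncard := by
          rw [Set.ncard_eq_toFinset_card _ (T.finite_frontier τ), smul_eq_mul, mul_comm]
      _ ≤ 4 * ⌊logb 2 (2 * τ)⌋₊ ^ 2 := by linarith [T.ncard_frontier_le τ]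

end Frontier

end MarkoffNode

theorem exists_markoff_descent {a b c : ℕ} (ha : 0 < a) (hb : 2 ≤ b) (hab : a ≤ b) (hbc : b ≤ c)
    (h : a ^ 2 + b ^ 2 + c ^ 2 = 3 * a * b * c) :
    ∃ k, 0 < k ∧ k < b ∧ b < c ∧ c + k = 3 * a * b ∧ a ^ 2 + k ^ 2 + b ^ 2 = 3 * a * k * b := by
  have hc : c < 3 * a * b := lt_of_mul_lt_mul_right (a := c) (by nlinarith) c.zero_le
  obtain ⟨k, hk⟩ := Nat.exists_eq_add_of_lt hc
  refine ⟨k + 1, k.succ_pos, ?_⟩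
  zify at *
  have hk' : a ^ 2 + (k + 1) ^ 2 + b ^ 2 = 3 * a * (k + 1) * (b : ℤ) := by
    linear_combination h - (k + 1 - c) * hk
  have hprod : (c - b) * (b - (k + 1)) = 3 * a * b ^ 2 - a ^ 2 - 2 * (b : ℤ) ^ 2 := by
    linear_combination (c - b) * hk + h
  have hpos : (0 : ℤ) < (c - b) * (b - (k + 1)) := by
    rw [hprod]
    nlinarith
  have hcb : (0 : ℤ) < c - b := by
    refine lt_of_le_of_ne (sub_nonneg.2 hbc) fun h₀ => hpos.ne' ?_
    rw [← h₀, zero_mul]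
  have := pos_of_mul_pos_right hpos hcb.le
  exact ⟨by linarith, by linarith, by linarith, hk'⟩

namespace MarkoffNode

theorem exists_root_descendant {a b c : ℕ} (h : IsMarkoffTriple (a, b, c)) (hc : 2 ≤ c)
    (hac : a ≤ c) (hbc : b ≤ c) :
    ∃ w, (root.descendant w).a = a ∧ (root.descendant w).b = b ∧ (root.descendant w).c = c := by
  induction c using Nat.strong_induction_on generalizing a b with
  | _ c ih =>
    wlog hab : a ≤ b generalizing a b
    · obtain ⟨w, hb, ha, hc⟩ := this (a := b) (b := a) ⟨h.2.1, h.1, h.2.2.1, by linarith [h.2.2.2]⟩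
        hbc hac (le_of_not_ge hab)
      refine ⟨w.map not, ?_⟩
      rw [show root = root.swap from rfl, swap_descendant_map_not]
      exact ⟨ha, hb, hc⟩
    obtain ⟨ha₀, hb₀, hc₀, h⟩ := h
    dsimp only at *
    rcases Nat.lt_or_ge b 2 with hb | hb
    · obtain rfl : b = 1 := by omega
      obtain rfl : a = 1 := by omega
      obtain rfl : c = 2 := by nlinarith
      exact ⟨[], by simp [descendant]⟩
    · obtain ⟨k, hk₀, hkb, hbc, hsum, hk⟩ := exists_markoff_descent ha₀ hb hab hbc h
      obtain ⟨w, ha, hk', hb'⟩ := ih b hbc ⟨ha₀, hk₀, hb₀, hk⟩ hb hab hkb.le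
      refine ⟨w ++ [true], ?_⟩
      rw [descendant_append]
      simp only [descendant, right_a, right_b, right_c, ha, hk', hb', true_and]
      rify at hsum
      linarith

/-- The entries of a node, rounded down to natural numbers. -/
noncomputable def entries (T : MarkoffNode) : ℕ × ℕ × ℕ := (⌊T.a⌋₊, ⌊T.b⌋₊, ⌊T.c⌋₊)

theorem ncard_isMarkoffTriple_le {m : ℕ} (hm : 2 ≤ m) :
    {t : ℕ × ℕ × ℕ | IsMarkoffTriple t ∧ t.1 ≤ t.2.1 ∧ t.2.1 ≤ t.2.2 ∧ t.2.2 = m}.ncard ≤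
      (root.fiber m).ncard := by
  have hfin : (root.fiber m).Finite :=
    (root.finite_setOf_descendant_c_le m).subset fun _ hw => hw.out.le
  refine (Set.ncard_le_ncard ?_ (hfin.image fun w => (root.descendant w).entries)).trans
    (Set.ncard_image_le hfin)
  rintro ⟨a, b, _⟩ ⟨h, hab, hbc, rfl⟩
  obtain ⟨w, ha, hb, hc⟩ := exists_root_descendant h hm (hab.trans hbc) hbc
  exact ⟨w, hc, by simp [entries, ha, hb, hc]⟩

end MarkoffNode

theorem logb_two_mul_le {x : ℝ} (hx : 4 / 3 ≤ x) : logb 2 (2 * (7 * x)) ≤ 18 * log x := by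
  have hlog : 1 / 4 ≤ log x := by
    refine le_trans ?_ (one_sub_inv_le_log_of_pos (by linarith))
    linarith [inv_anti₀ (by norm_num) hx]
  have h14 : logb 2 14 ≤ 4 := by
    rw [logb_le_iff_le_rpow one_lt_two (by norm_num)]
    norm_num
  have hlogb : logb 2 x ≤ 2 * log x := by
    rw [logb, div_le_iff₀ (log_pos one_lt_two)]
    nlinarith [log_two_gt_d9]
  rw [← mul_assoc, show (2 * 7 : ℝ) = 14 by norm_num, logb_mul (by norm_num) (by linarith)]
  linarith

/-- There is a constant `C > 0` such that, for every `m ≥ 2`, the number of Markoff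
triples `(a, b, c)` with `a ≤ b ≤ c` and largest entry `c = m` is at most
`C · (log log (3m))²`. -/
theorem markoff_fiber_loglog_squared_bound :
    ∃ C : ℝ, 0 < C ∧ ∀ m : ℕ, 2 ≤ m →
      (Set.ncard {t : ℕ × ℕ × ℕ | IsMarkoffTriple t ∧ t.1 ≤ t.2.1 ∧ t.2.1 ≤ t.2.2 ∧
          t.2.2 = m} : ℝ)
        ≤ C * (Real.log (Real.log (3 * m))) ^ 2 := by
  refine ⟨4 * 18 ^ 2, by norm_num, fun m hm => ?_⟩
  have hR : 4 / 3 ≤ log (3 * m) := by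
    linarith [two_mul_log_two_le_log (c := m) (mod_cast hm), log_two_gt_d9]
  have hroot : MarkoffNode.root.c ≤ 7 * log (3 * m) := by
    rw [MarkoffNode.root_c]
    linarith
  have hn : (⌊logb 2 (2 * (7 * log (3 * m)))⌋₊ : ℝ) ≤ 18 * log (log (3 * m)) :=
    (Nat.floor_le (logb_nonneg one_lt_two (by linarith))).trans (logb_two_mul_le hR)
  have hcard := (MarkoffNode.ncard_isMarkoffTriple_le hm).trans (MarkoffNode.ncard_fiber_le hroot)
  refine (Nat.cast_le.2 hcard).trans ?_
  push_cast
  calc 4 * (⌊logb 2 (2 * (7 * log (3 * m)))⌋₊ : ℝ) ^ 2 ≤ 4 * (18 * log (log (3 * m))) ^ 2 := by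
        gcongr
    _ = 4 * 18 ^ 2 * log (log (3 * m)) ^ 2 := by ring
end

section
/- For every ε > 0 there exists a constant C(ε) > 0 such that for every integer m ≥ 2, the number of Markoff triples (a, b, c) of positive integers with a ≤ b ≤ c, a² + b² + c² = 3·a·b·c, and c = m is at most C(ε)·(log m)^ε. -/
/-!
Writing a trace as `x = 2 cosh ℓ`, the relation `x² + y² + z² = xyz` between the traces at two basis
vectors and their sum becomes
`(cosh (ℓ₁ + ℓ₂) - cosh ℓ₃) * (cosh ℓ₃ - cosh (ℓ₁ - ℓ₂)) = 1`.
Hence, along the Markoff tree, the length of the sum falls short of the sum of the lengths by a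
defect of order `z⁻²`, which decreases geometrically. A Markoff triple with largest entry `m` is a
vertex of trace `3m`, and the number of these is bounded as follows.

* At each vertex the length function has a linear support form, strictly smaller at all other
  vertices. Hence no three vertices of equal trace lie on a line.
* In the subtree below a vertex of trace `z ≥ C log m`, the length is so close to a linear form
  that a triangle of vertices of trace `3m` would have area less than `1 / 2`, which is impossible
  for lattice points. So these vertices are collinear, and there are at most two of them.
* Only `O((log log m)²)` vertices have trace below `C log m`, since the length at a vertex is at
  least half the sum of its coordinates.
-/

open Real Set

section Hyperbolic

theorem sinh_mul_sub_le_cosh_sub_cosh (a b : ℝ) : sinh a * (b - a) ≤ cosh b - cosh a := by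
  have h₁ := mul_le_mul_of_nonneg_left (add_one_le_exp (b - a)) (exp_pos a).le
  have h₂ := mul_le_mul_of_nonneg_left (add_one_le_exp (a - b)) (exp_pos (-a)).le
  rw [← exp_add, show a + (b - a) = b by ring] at h₁
  rw [← exp_add, show -a + (a - b) = -b by ring] at h₂
  rw [sinh_eq, cosh_eq, cosh_eq]
  linarith

variable {a b c : ℝ}

theorem cosh_add_sub_mul_sub_cosh_sub
    (h : cosh a ^ 2 + cosh b ^ 2 + cosh c ^ 2 = 2 * cosh a * cosh b * cosh c) :
    (cosh (a + b) - cosh c) * (cosh c - cosh (a - b)) = 1 := by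
  rw [cosh_add, cosh_sub]
  linear_combination -h - sinh b ^ 2 * cosh_sq a - (cosh a ^ 2 - 1) * cosh_sq b

theorem cosh_mem_Ioo_cosh_sub_cosh_add (ha : 0 ≤ a) (hb : 0 ≤ b)
    (h : cosh a ^ 2 + cosh b ^ 2 + cosh c ^ 2 = 2 * cosh a * cosh b * cosh c) :
    cosh c ∈ Ioo (cosh (a - b)) (cosh (a + b)) := by
  have hprod := cosh_add_sub_mul_sub_cosh_sub h
  have hle : cosh (a - b) ≤ cosh (a + b) := by
    rw [cosh_add, cosh_sub]
    nlinarith [mul_nonneg (sinh_nonneg_iff.2 ha) (sinh_nonneg_iff.2 hb)]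
  rcases mul_pos_iff.1 (hprod ▸ one_pos) with ⟨h₁, h₂⟩ | ⟨h₁, h₂⟩
  · exact ⟨sub_pos.1 h₂, sub_pos.1 h₁⟩
  · linarith

theorem lt_add_of_cosh_sq_add (ha : 0 ≤ a) (hb : 0 ≤ b)
    (h : cosh a ^ 2 + cosh b ^ 2 + cosh c ^ 2 = 2 * cosh a * cosh b * cosh c) : c < a + b := by
  have habs := cosh_lt_cosh.1 (cosh_mem_Ioo_cosh_sub_cosh_add ha hb h).2
  rw [abs_of_nonneg (add_nonneg ha hb)] at habs
  exact (le_abs_self c).trans_lt habs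

theorem add_sub_mul_sinh_mul_le (ha : 0 ≤ a) (hb : 0 ≤ b) (hc : 0 ≤ c)
    (h : cosh a ^ 2 + cosh b ^ 2 + cosh c ^ 2 = 2 * cosh a * cosh b * cosh c) :
    (a + b - c) * sinh c * (2 * (cosh c - cosh a * cosh b)) ≤ 1 := by
  have hlo := (cosh_mem_Ioo_cosh_sub_cosh_add ha hb h).1
  have hslope := sinh_mul_sub_le_cosh_sub_cosh c (a + b)
  have hpos : 0 ≤ (a + b - c) * sinh c :=
    mul_nonneg (by linarith [lt_add_of_cosh_sq_add ha hb h]) (sinh_nonneg_iff.2 hc)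
  have hsum : cosh (a + b) + cosh (a - b) = 2 * (cosh a * cosh b) := by
    rw [cosh_add, cosh_sub]; ring
  calc (a + b - c) * sinh c * (2 * (cosh c - cosh a * cosh b))
      ≤ (a + b - c) * sinh c * (cosh c - cosh (a - b)) :=
        mul_le_mul_of_nonneg_left (by linarith) hpos
    _ ≤ (cosh (a + b) - cosh c) * (cosh c - cosh (a - b)) :=
        mul_le_mul_of_nonneg_right (by linarith) (by linarith)
    _ = 1 := cosh_add_sub_mul_sub_cosh_sub h

theorem one_le_add_sub_mul_cosh (ha : 0 ≤ a) (hb : 0 ≤ b)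
    (h : cosh a ^ 2 + cosh b ^ 2 + cosh c ^ 2 = 2 * cosh a * cosh b * cosh c) :
    1 ≤ (a + b - c) * (2 * (cosh a * cosh b * cosh c)) := by
  have hlo := (cosh_mem_Ioo_cosh_sub_cosh_add ha hb h).1
  have hpos : 0 ≤ a + b - c := by linarith [lt_add_of_cosh_sq_add ha hb h]
  have hslope := sinh_mul_sub_le_cosh_sub_cosh (a + b) c
  have hsinh : sinh (a + b) ≤ 2 * (cosh a * cosh b) := by
    have hsum : cosh (a + b) + cosh (a - b) = 2 * (cosh a * cosh b) := by
      rw [cosh_add, cosh_sub]; ring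
    linarith [sinh_lt_cosh (a + b), cosh_pos (a - b)]
  calc 1 = (cosh (a + b) - cosh c) * (cosh c - cosh (a - b)) :=
        (cosh_add_sub_mul_sub_cosh_sub h).symm
    _ ≤ ((a + b - c) * sinh (a + b)) * cosh c := by
        gcongr
        · linarith
        · linarith [cosh_pos (a - b)]
    _ ≤ ((a + b - c) * (2 * (cosh a * cosh b))) * cosh c := by gcongr
    _ = (a + b - c) * (2 * (cosh a * cosh b * cosh c)) := by ring

end Hyperbolic

theorem log_sq_le_rpow_div {x ε : ℝ} (hx : 1 ≤ x) (hε : 0 < ε) :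
    log x ^ 2 ≤ 4 / ε ^ 2 * x ^ ε := by
  have hx₀ : 0 ≤ x := zero_le_one.trans hx
  calc log x ^ 2 ≤ (x ^ (ε / 2) / (ε / 2)) ^ 2 :=
        pow_le_pow_left₀ (log_nonneg hx) (log_le_rpow_div hx₀ (half_pos hε)) 2
    _ = 4 / ε ^ 2 * (x ^ (ε / 2) * x ^ (ε / 2)) := by field_simp; ring
    _ = 4 / ε ^ 2 * x ^ ε := by rw [← rpow_add (by linarith), add_halves]

theorem collinear_of_det_eq_zero {K : Type*} [Field K] {p q r : K × K}
    (h : (q.1 - p.1) * (r.2 - p.2) - (q.2 - p.2) * (r.1 - p.1) = 0) :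
    Collinear K {p, q, r} := by
  by_cases hpq : q = p
  · subst hpq; simpa using collinear_pair K q r
  rw [collinear_iff_of_mem (mem_insert p _)]
  refine ⟨q - p, ?_⟩
  simp only [mem_insert_iff, mem_singleton_iff, forall_eq_or_imp, forall_eq, vadd_eq_add]
  refine ⟨⟨0, by simp⟩, ⟨1, by simp⟩, ?_⟩
  by_cases h₁ : q.1 - p.1 = 0
  · have h₂ : q.2 - p.2 ≠ 0 := fun h₂ => hpq (Prod.ext (sub_eq_zero.1 h₁) (sub_eq_zero.1 h₂))
    refine ⟨(r.2 - p.2) / (q.2 - p.2), Prod.ext ?_ ?_⟩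
    · simp only [h₁, zero_mul, zero_sub, neg_eq_zero, mul_eq_zero, h₂, false_or] at h
      simp [h₁, sub_eq_zero.1 h]
    · simp [h₂]
  · refine ⟨(r.1 - p.1) / (q.1 - p.1), Prod.ext ?_ ?_⟩
    · simp [h₁]
    · simp only [Prod.snd_add, Prod.smul_snd, Prod.snd_sub, smul_eq_mul]
      field_simp
      linear_combination h

theorem abs_le_of_int_det_ne_zero {a b c d : ℤ} (hdet : a * d - b * c ≠ 0) {u v δ N : ℝ}
    (h₁ : |a * u + b * v| ≤ δ) (h₂ : |c * u + d * v| ≤ δ) (hb : |(b : ℝ)| ≤ N)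
    (hd : |(d : ℝ)| ≤ N) : |u| ≤ 2 * δ * N := by
  have hone : (1 : ℝ) ≤ |(a * d - b * c : ℝ)| := by exact_mod_cast Int.one_le_abs hdet
  have hδ : 0 ≤ δ := (abs_nonneg _).trans h₁
  calc |u| = 1 * |u| := (one_mul _).symm
    _ ≤ |(a * d - b * c : ℝ)| * |u| := by gcongr
    _ = |(a * u + b * v) * d - (c * u + d * v) * b| := by rw [← abs_mul]; ring_nf
    _ ≤ |a * u + b * v| * |(d : ℝ)| + |c * u + d * v| * |(b : ℝ)| := by
        rw [← abs_mul, ← abs_mul]; exact abs_sub _ _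
    _ ≤ δ * N + δ * N := by gcongr
    _ = 2 * δ * N := by ring

/-- Half the translation length of a hyperbolic element of `SL₂(ℝ)` of trace `x`: the `ℓ ≥ 0` with
`x = 2 cosh ℓ`, for `x ≥ 2`. -/
noncomputable def traceLength (x : ℝ) : ℝ := arcosh (x / 2)

theorem two_mul_cosh_traceLength {x : ℝ} (hx : 2 ≤ x) : 2 * cosh (traceLength x) = x := by
  rw [traceLength, cosh_arcosh (by linarith)]; ring

theorem traceLength_nonneg {x : ℝ} (hx : 2 ≤ x) : 0 ≤ traceLength x :=
  arcosh_nonneg (by linarith)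

theorem log_le_traceLength {t x : ℝ} (ht : 1 ≤ t) (h : t + t⁻¹ ≤ x) : log t ≤ traceLength x := by
  have ht₀ : 0 < t := by linarith
  have hcosh : cosh (log t) ≤ x / 2 := by rw [cosh_log ht₀]; linarith
  rw [← arcosh_cosh (log_nonneg ht), traceLength,
    arcosh_le_arcosh (cosh_pos _) ((cosh_pos _).trans_le hcosh)]
  exact hcosh

theorem traceLength_le_log {x : ℝ} (hx : 2 ≤ x) : traceLength x ≤ log x := by
  have hexp := exp_pos (-traceLength x)
  have hcosh := two_mul_cosh_traceLength hx
  rw [cosh_eq] at hcosh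
  rw [le_log_iff_exp_le (by linarith)]
  linarith

/-! ### Words in a binary tree -/

/-- A step from a vertex of the rooted binary tree to one of its two children; a vertex is the list
of steps that leads to it from the root. -/
inductive Turn
  | left
  | right

theorem encard_eq_add_encard_cons (S : Set (List Turn)) :
    S.encard = (S ∩ {[]}).encard + {w | .left :: w ∈ S}.encard + {w | .right :: w ∈ S}.encard := by
  have hdecomp : S = S ∩ {[]} ∪ List.cons .left '' {w | .left :: w ∈ S} ∪
      List.cons .right '' {w | .right :: w ∈ S} := by
    ext (_ | ⟨_ | _, w⟩) <;> simp
  conv_lhs => rw [hdecomp]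
  rw [encard_union_eq, encard_union_eq, List.cons_injective.encard_image,
    List.cons_injective.encard_image]
  all_goals
    rw [disjoint_left]
    rintro (_ | ⟨_ | _, w⟩) <;> simp

theorem encard_le_of_forall_prefix_notMem {S T : Set (List Turn)} {b : ℕ∞}
    (h : ∀ p ∉ T, {w | p ++ w ∈ S}.encard ≤ b) : S.encard ≤ (b + 1) * T.encard + b := by
  rcases T.finite_or_infinite with hT | hT
  swap
  · simp [hT.encard_eq]
  obtain ⟨n, hn⟩ : ∃ n : ℕ, T.encard ≤ n := ⟨T.ncard, hT.cast_ncard_eq.ge⟩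
  clear hT
  induction n generalizing S T with
  | zero =>
    obtain rfl : T = ∅ := by simpa using hn
    simpa using h [] (notMem_empty _)
  | succ n ih =>
    by_cases hnil : [] ∈ T
    swap
    · exact (h [] hnil).trans le_add_self
    have hT := encard_eq_add_encard_cons T
    rw [inter_eq_right.2 (singleton_subset_iff.2 hnil), encard_singleton] at hT
    have hn' : {w | .left :: w ∈ T}.encard + {w | .right :: w ∈ T}.encard ≤ n := by
      rw [hT, add_assoc, add_comm, Nat.cast_succ] at hn
      exact (ENat.add_le_add_iff_right ENat.one_ne_top).1 hn
    have hnil_le : (S ∩ {[]}).encard ≤ 1 :=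
      (encard_le_encard inter_subset_right).trans_eq (encard_singleton _)
    have hleft := ih (S := {w | Turn.left :: w ∈ S}) (T := {w | Turn.left :: w ∈ T})
      (fun p hp => h (.left :: p) hp) (le_self_add.trans hn')
    have hright := ih (S := {w | Turn.right :: w ∈ S}) (T := {w | Turn.right :: w ∈ T})
      (fun p hp => h (.right :: p) hp) (le_add_self.trans hn')
    rw [encard_eq_add_encard_cons S, hT]
    exact (add_le_add (add_le_add hnil_le hleft) hright).trans_eq (by ring)

/-- The primitive vector attached to a vertex of the Stern–Brocot tree: for the basis `e₁, e₂`
the root carries `e₁ + e₂`, and the two subtrees are the trees of the bases `e₁, e₁ + e₂` and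
`e₁ + e₂, e₂`. -/
def position : List Turn → ℕ × ℕ
  | [] => (1, 1)
  | .left :: w => ((position w).1 + (position w).2, (position w).2)
  | .right :: w => ((position w).1, (position w).1 + (position w).2)

theorem position_pos (w : List Turn) : 0 < (position w).1 ∧ 0 < (position w).2 := by
  induction w with
  | nil => simp [position]
  | cons t w ih => cases t <;> simp only [position] <;> omega

theorem position_injective : Function.Injective position := by
  intro w
  induction w with
  | nil =>
    rintro (_ | ⟨_ | _, w'⟩) h
    · rfl
    all_goals
      have := position_pos w'
      simp only [position, Prod.mk.injEq] at h
      omega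
  | cons t w ih =>
    have := position_pos w
    rintro (_ | ⟨t', w'⟩) h
    · cases t <;> simp only [position, Prod.mk.injEq] at h <;> omega
    · have := position_pos w'
      cases t <;> cases t' <;> simp only [position, Prod.mk.injEq] at h
      · rw [ih (a₂ := w') (Prod.ext (by omega) (by omega))]
      · omega
      · omega
      · rw [ih (a₂ := w') (Prod.ext (by omega) (by omega))]

/-- The value at `position w` of the linear form with values `u, v` at the two basis vectors. -/
def linearForm (u v : ℝ) (w : List Turn) : ℝ := (position w).1 * u + (position w).2 * v

@[simp]
theorem linearForm_nil (u v : ℝ) : linearForm u v [] = u + v := by simp [linearForm, position]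

@[simp]
theorem linearForm_left (u v : ℝ) (w : List Turn) :
    linearForm u v (.left :: w) = linearForm u (u + v) w := by
  simp only [linearForm, position]; push_cast; ring

@[simp]
theorem linearForm_right (u v : ℝ) (w : List Turn) :
    linearForm u v (.right :: w) = linearForm (u + v) v w := by
  simp only [linearForm, position]; push_cast; ring

/-- `position w` as a point of the real plane. -/
def positionVec (w : List Turn) : ℝ × ℝ := ((position w).1, (position w).2)

/-! ### Cones of the Markoff tree -/

/-- The traces `x, y, z` attached to two basis vectors and to their sum, which determine the
traces at all vectors of the cone they span. The Markoff triple `(a, b, c)` corresponds to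
`(3a, 3b, 3c)`. -/
structure MarkoffCone where
  x : ℝ
  y : ℝ
  z : ℝ

namespace MarkoffCone

/-- The subcone of the basis `(e₁, e₁ + e₂)`; its third trace is the Vieta conjugate of `y`. -/
def left (s : MarkoffCone) : MarkoffCone := ⟨s.x, s.z, s.x * s.z - s.y⟩

/-- The subcone of the basis `(e₁ + e₂, e₂)`; its third trace is the Vieta conjugate of `x`. -/
def right (s : MarkoffCone) : MarkoffCone := ⟨s.z, s.y, s.z * s.y - s.x⟩

/-- The same cone with its two basis vectors exchanged. -/
def swap (s : MarkoffCone) : MarkoffCone := ⟨s.y, s.x, s.z⟩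

theorem right_eq_swap_left_swap (s : MarkoffCone) : s.right = s.swap.left.swap := by
  simp only [right, swap, left, mul_comm]

/-- The subcone reached by following the word `w`. -/
def descend : MarkoffCone → List Turn → MarkoffCone
  | s, [] => s
  | s, .left :: w => s.left.descend w
  | s, .right :: w => s.right.descend w

theorem descend_append (s : MarkoffCone) (w w' : List Turn) :
    s.descend (w ++ w') = (s.descend w).descend w' := by
  induction w generalizing s with
  | nil => rfl
  | cons t w ih => cases t <;> exact ih _

/-- The Markoff equation `x² + y² + z² = xyz` together with inequalities, satisfied by
`(3, 3, 6)` and inherited by subcones, that keep the traces hyperbolic and make `z` the larger root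
of the equation. -/
structure Admissible (s : MarkoffCone) : Prop where
  three_le_x : 3 ≤ s.x
  three_le_y : 3 ≤ s.y
  two_mul_mul_le : 2 * (s.x * s.y) ≤ 3 * s.z
  equation : s.x ^ 2 + s.y ^ 2 + s.z ^ 2 = s.x * s.y * s.z

namespace Admissible

variable {s : MarkoffCone}

theorem swap (hs : s.Admissible) : s.swap.Admissible where
  three_le_x := hs.three_le_y
  three_le_y := hs.three_le_x
  two_mul_mul_le := by simp only [MarkoffCone.swap]; linarith [hs.two_mul_mul_le]
  equation := by simp only [MarkoffCone.swap]; linear_combination hs.equation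

theorem two_mul_y_le_z (hs : s.Admissible) : 2 * s.y ≤ s.z := by
  nlinarith [hs.three_le_x, hs.three_le_y, hs.two_mul_mul_le]

theorem six_le_z (hs : s.Admissible) : 6 ≤ s.z := by
  linarith [hs.three_le_y, hs.two_mul_y_le_z]

theorem left (hs : s.Admissible) : s.left.Admissible where
  three_le_x := hs.three_le_x
  three_le_y := by linarith [hs.six_le_z, show s.left.y = s.z from rfl]
  two_mul_mul_le := by
    simp only [MarkoffCone.left]
    nlinarith [hs.three_le_x, hs.two_mul_y_le_z, hs.six_le_z]
  equation := by simp only [MarkoffCone.left]; linear_combination hs.equation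

theorem right (hs : s.Admissible) : s.right.Admissible :=
  s.right_eq_swap_left_swap ▸ hs.swap.left.swap

theorem descend (hs : s.Admissible) (w : List Turn) : (s.descend w).Admissible := by
  induction w generalizing s with
  | nil => exact hs
  | cons t w ih => cases t with
    | left => exact ih hs.left
    | right => exact ih hs.right

end Admissible

/-- The amount by which the trace length fails to be additive on the basis of the cone. -/
noncomputable def defect (s : MarkoffCone) : ℝ :=
  traceLength s.x + traceLength s.y - traceLength s.z

theorem defect_swap (s : MarkoffCone) : s.swap.defect = s.defect := by
  simp only [defect, swap, add_comm]

namespace Admissible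

variable {s : MarkoffCone}

theorem cosh_traceLength (hs : s.Admissible) :
    cosh (traceLength s.x) = s.x / 2 ∧ cosh (traceLength s.y) = s.y / 2 ∧
      cosh (traceLength s.z) = s.z / 2 := by
  have hx := two_mul_cosh_traceLength (show 2 ≤ s.x by linarith [hs.three_le_x])
  have hy := two_mul_cosh_traceLength (show 2 ≤ s.y by linarith [hs.three_le_y])
  have hz := two_mul_cosh_traceLength (show 2 ≤ s.z by linarith [hs.six_le_z])
  refine ⟨?_, ?_, ?_⟩ <;> linarith

theorem cosh_equation (hs : s.Admissible) :
    cosh (traceLength s.x) ^ 2 + cosh (traceLength s.y) ^ 2 + cosh (traceLength s.z) ^ 2 =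
      2 * cosh (traceLength s.x) * cosh (traceLength s.y) * cosh (traceLength s.z) := by
  obtain ⟨hx, hy, hz⟩ := hs.cosh_traceLength
  rw [hx, hy, hz]
  linear_combination hs.equation / 4

theorem traceLength_x_nonneg (hs : s.Admissible) : 0 ≤ traceLength s.x :=
  traceLength_nonneg (by linarith [hs.three_le_x])

theorem traceLength_y_nonneg (hs : s.Admissible) : 0 ≤ traceLength s.y :=
  traceLength_nonneg (by linarith [hs.three_le_y])

theorem defect_pos (hs : s.Admissible) : 0 < s.defect :=
  sub_pos.2 (lt_add_of_cosh_sq_add hs.traceLength_x_nonneg hs.traceLength_y_nonneg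
    hs.cosh_equation)

theorem four_le_defect_mul (hs : s.Admissible) : 4 ≤ s.defect * (s.x * s.y * s.z) := by
  have h := one_le_add_sub_mul_cosh hs.traceLength_x_nonneg hs.traceLength_y_nonneg
    hs.cosh_equation
  obtain ⟨hx, hy, hz⟩ := hs.cosh_traceLength
  rw [hx, hy, hz] at h
  unfold defect
  linarith

theorem mul_z_le_sinh (hs : s.Admissible) : 9 / 20 * s.z ≤ sinh (traceLength s.z) := by
  have hz := hs.six_le_z
  have hsq := sinh_sq (traceLength s.z)
  rw [hs.cosh_traceLength.2.2] at hsq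
  refine le_of_sq_le_sq ?_ (sinh_nonneg_iff.2 (traceLength_nonneg (by linarith)))
  nlinarith

theorem defect_mul_le (hs : s.Admissible) :
    s.defect * (s.z * (2 * s.z - s.x * s.y)) ≤ 40 / 9 := by
  have hz := hs.six_le_z
  have hpos : 0 ≤ 2 * s.z - s.x * s.y := by linarith [hs.two_mul_mul_le]
  have h := add_sub_mul_sinh_mul_le hs.traceLength_x_nonneg hs.traceLength_y_nonneg
    (traceLength_nonneg (by linarith)) hs.cosh_equation
  obtain ⟨hx, hy, hz'⟩ := hs.cosh_traceLength
  rw [hx, hy, hz'] at h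
  have hmul := mul_le_mul_of_nonneg_right
    (mul_le_mul_of_nonneg_left hs.mul_z_le_sinh hs.defect_pos.le) hpos
  unfold defect at *
  linarith

theorem defect_mul_z_sq_le (hs : s.Admissible) : s.defect * s.z ^ 2 ≤ 9 := by
  have hz := hs.six_le_z
  have hdefect := hs.defect_pos
  have hhalf : s.z ^ 2 ≤ 2 * (s.z * (2 * s.z - s.x * s.y)) := by
    nlinarith [hs.two_mul_mul_le]
  linarith [mul_le_mul_of_nonneg_left hhalf hdefect.le, hs.defect_mul_le]

theorem defect_le (hs : s.Admissible) : s.defect ≤ 1 / 4 := by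
  have hz : (6 : ℝ) ^ 2 ≤ s.z ^ 2 := pow_le_pow_left₀ (by norm_num) hs.six_le_z 2
  linarith [hs.defect_mul_z_sq_le, mul_le_mul_of_nonneg_left hz hs.defect_pos.le]

theorem three_mul_defect_left_le (hs : s.Admissible) : 3 * s.left.defect ≤ s.defect := by
  have hx := hs.three_le_x
  have hy := hs.three_le_y
  have hz := hs.six_le_z
  have hyz := hs.two_mul_y_le_z
  have hpos : 0 < s.x * s.y * s.z := by positivity
  have hgrowth : 10 / 3 * (s.x * s.y * s.z) ≤ s.left.z * (2 * s.left.z - s.left.x * s.left.y) := by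
    have h6 : 6 * s.y ≤ s.x * s.z := by nlinarith
    simp only [MarkoffCone.left]
    nlinarith [mul_nonneg (sub_nonneg.2 h6) (sub_nonneg.2 h6)]
  have hleft := hs.left.defect_mul_le
  have h := hs.four_le_defect_mul
  have := mul_le_mul_of_nonneg_left hgrowth hs.left.defect_pos.le
  refine le_of_mul_le_mul_right ?_ hpos
  linarith

theorem three_mul_defect_right_le (hs : s.Admissible) : 3 * s.right.defect ≤ s.defect := by
  rw [right_eq_swap_left_swap, defect_swap, ← defect_swap s]
  exact hs.swap.three_mul_defect_left_le

end Admissible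

/-- The trace at the sum of the basis vectors of the subcone `w`. -/
def value (s : MarkoffCone) (w : List Turn) : ℝ := (s.descend w).z

/-- The trace length at the sum of the basis vectors of the subcone `w`. -/
noncomputable def height (s : MarkoffCone) (w : List Turn) : ℝ := traceLength (s.value w)

namespace Admissible

variable {s : MarkoffCone}

theorem height_le_linearForm (hs : s.Admissible) {u v : ℝ} (hu : traceLength s.x ≤ u)
    (hv : traceLength s.y ≤ v) (w : List Turn) : s.height w ≤ linearForm u v w := by
  have hz : traceLength s.z ≤ u + v := by
    have := hs.defect_pos
    unfold defect at this
    linarith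
  induction w generalizing s u v with
  | nil => rwa [linearForm_nil]
  | cons t w ih =>
    cases t with
    | left =>
      rw [linearForm_left]
      refine ih hs.left hu hz ?_
      have := hs.left.defect_pos
      simp only [defect, MarkoffCone.left] at *
      linarith
    | right =>
      rw [linearForm_right]
      refine ih hs.right hz hv ?_
      have := hs.right.defect_pos
      simp only [defect, MarkoffCone.right] at *
      linarith

/-- The hypothesis on `u + v` passes to the subcones because their defects `δ` satisfy
`3 * δ ≤ s.defect`: the sum of the old bounds leaves a margin `3 / 2 * δ`, of which `δ` is lost. -/
theorem linearForm_lt_height (hs : s.Admissible) {u v : ℝ} (hu : u ≤ traceLength s.x)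
    (hv : v ≤ traceLength s.y) (huv : u + v ≤ traceLength s.z - s.defect / 2) (w : List Turn) :
    linearForm u v w < s.height w := by
  induction w generalizing s u v with
  | nil =>
    rw [linearForm_nil]
    exact huv.trans_lt (sub_lt_self _ (half_pos hs.defect_pos))
  | cons t w ih =>
    have hdefect := hs.defect_pos
    cases t with
    | left =>
      have hleft := hs.three_mul_defect_left_le
      rw [linearForm_left]
      refine ih hs.left hu (by change u + v ≤ traceLength s.z; linarith) ?_
      simp only [defect, MarkoffCone.left] at *
      linarith
    | right =>
      have hright := hs.three_mul_defect_right_le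
      rw [linearForm_right]
      refine ih hs.right (by change u + v ≤ traceLength s.z; linarith) hv ?_
      simp only [defect, MarkoffCone.right] at *
      linarith

end Admissible

/-- The linear form with values `u, v` on the basis touches the height function exactly at `w₀`. The
bounds on `u`, `v` and `u + v` are what allows such a form to be transported from a subcone. -/
structure IsSupport (s : MarkoffCone) (w₀ : List Turn) (u v : ℝ) : Prop where
  lt_x : u < traceLength s.x
  lt_y : v < traceLength s.y
  le_add : traceLength s.z - s.defect / 2 ≤ u + v
  eq_height : linearForm u v w₀ = s.height w₀
  lt_height : ∀ w ≠ w₀, linearForm u v w < s.height w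

namespace Admissible

variable {s : MarkoffCone} {w₀ : List Turn}

theorem isSupport_nil (hs : s.Admissible) :
    s.IsSupport [] (traceLength s.x - s.defect / 2) (traceLength s.y - s.defect / 2) := by
  have hdefect := hs.defect_pos
  have hleft := hs.three_mul_defect_left_le
  have hright := hs.three_mul_defect_right_le
  have hsum : traceLength s.x - s.defect / 2 + (traceLength s.y - s.defect / 2) =
      traceLength s.z := by unfold defect; ring
  refine ⟨by linarith, by linarith, by linarith, by rw [linearForm_nil, hsum]; rfl, ?_⟩
  rintro (_ | ⟨_ | _, w⟩) hw
  · exact absurd rfl hw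
  · rw [linearForm_left, hsum]
    refine hs.left.linearForm_lt_height (by change _ ≤ traceLength s.x; linarith) le_rfl ?_ w
    simp only [defect, MarkoffCone.left] at *
    linarith
  · rw [linearForm_right, hsum]
    refine hs.right.linearForm_lt_height le_rfl (by change _ ≤ traceLength s.y; linarith) ?_ w
    simp only [defect, MarkoffCone.right] at *
    linarith

theorem isSupport_left (hs : s.Admissible) {u t : ℝ} (h : s.left.IsSupport w₀ u t) :
    s.IsSupport (.left :: w₀) u (t - u) := by
  have hdefect := hs.defect_pos
  have hleft := hs.three_mul_defect_left_le
  have hright := hs.three_mul_defect_right_le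
  obtain ⟨hu, ht, hut, heq, hlt⟩ := h
  simp only [MarkoffCone.left, MarkoffCone.right, defect] at hu ht hut hdefect hleft hright
  have hsum : u + (t - u) = t := by ring
  refine ⟨hu, by linarith, by unfold defect; linarith, by rw [linearForm_left, hsum, heq]; rfl, ?_⟩
  rintro (_ | ⟨_ | _, w⟩) hw
  · rw [linearForm_nil, hsum]; exact ht
  · rw [linearForm_left, hsum]; exact hlt w (by simpa using hw)
  · rw [linearForm_right, hsum]
    refine hs.right.linearForm_lt_height ht.le (by change _ ≤ traceLength s.y; linarith) ?_ w
    simp only [MarkoffCone.right, defect]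
    linarith

theorem isSupport_right (hs : s.Admissible) {t v : ℝ} (h : s.right.IsSupport w₀ t v) :
    s.IsSupport (.right :: w₀) (t - v) v := by
  have hdefect := hs.defect_pos
  have hleft := hs.three_mul_defect_left_le
  have hright := hs.three_mul_defect_right_le
  obtain ⟨ht, hv, htv, heq, hlt⟩ := h
  simp only [MarkoffCone.left, MarkoffCone.right, defect] at ht hv htv hdefect hleft hright
  have hsum : t - v + v = t := by ring
  refine ⟨by linarith, hv, by unfold defect; linarith,
    by rw [linearForm_right, hsum, heq]; rfl, ?_⟩
  rintro (_ | ⟨_ | _, w⟩) hw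
  · rw [linearForm_nil, hsum]; exact ht
  · rw [linearForm_left, hsum]
    refine hs.left.linearForm_lt_height (by change _ ≤ traceLength s.x; linarith) ht.le ?_ w
    simp only [MarkoffCone.left, defect]
    linarith
  · rw [linearForm_right, hsum]; exact hlt w (by simpa using hw)

theorem exists_isSupport (hs : s.Admissible) (w₀ : List Turn) : ∃ u v, s.IsSupport w₀ u v := by
  induction w₀ generalizing s with
  | nil => exact ⟨_, _, hs.isSupport_nil⟩
  | cons t w₀ ih =>
    cases t with
    | left =>
      obtain ⟨u, t, h⟩ := ih hs.left
      exact ⟨_, _, hs.isSupport_left h⟩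
    | right =>
      obtain ⟨t, v, h⟩ := ih hs.right
      exact ⟨_, _, hs.isSupport_right h⟩

end Admissible

variable {s : MarkoffCone} {w₁ w₂ w₃ : List Turn} {r : ℝ}

theorem IsSupport.not_wbtw {u v : ℝ} (h : s.IsSupport w₂ u v) (h₁ : w₁ ≠ w₂) (h₃ : w₃ ≠ w₂)
    (hle₁ : s.height w₁ ≤ s.height w₂) (hle₃ : s.height w₃ ≤ s.height w₂) :
    ¬ Wbtw ℝ (positionVec w₁) (positionVec w₂) (positionVec w₃) := by
  rintro ⟨t, ⟨ht₀, ht₁⟩, hline⟩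
  have hlt₁ := (h.lt_height w₁ h₁).trans_le hle₁
  have hlt₃ := (h.lt_height w₃ h₃).trans_le hle₃
  have hconvex : linearForm u v w₂ = (1 - t) * linearForm u v w₁ + t * linearForm u v w₃ := by
    obtain ⟨hx, hy⟩ := Prod.ext_iff.1 hline
    simp only [positionVec, AffineMap.lineMap_apply, vsub_eq_sub, vadd_eq_add, Prod.fst_add,
      Prod.snd_add, Prod.smul_fst, Prod.smul_snd, Prod.fst_sub, Prod.snd_sub, smul_eq_mul] at hx hy
    unfold linearForm
    linear_combination -u * hx - v * hy
  rw [← h.eq_height, hconvex] at hlt₁ hlt₃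
  rcases le_total (linearForm u v w₁) (linearForm u v w₃) with hle | hle
  · linarith [mul_le_mul_of_nonneg_left hle (sub_nonneg.2 ht₁)]
  · linarith [mul_le_mul_of_nonneg_left hle ht₀]

theorem height_eq_of_value_eq (h : s.value w₁ = r) : s.height w₁ = traceLength r := by
  rw [height, h]

namespace Admissible

theorem not_collinear_of_value_eq (hs : s.Admissible) (h₁ : s.value w₁ = r) (h₂ : s.value w₂ = r)
    (h₃ : s.value w₃ = r) (h₁₂ : w₁ ≠ w₂) (h₁₃ : w₁ ≠ w₃) (h₂₃ : w₂ ≠ w₃) :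
    ¬ Collinear ℝ {positionVec w₁, positionVec w₂, positionVec w₃} := by
  intro hcol
  have hnot : ∀ {p q p' : List Turn}, s.value p = r → s.value q = r → s.value p' = r →
      p ≠ q → p' ≠ q → ¬ Wbtw ℝ (positionVec p) (positionVec q) (positionVec p') := by
    intro p q p' hp hq hp' hne hne'
    obtain ⟨u, v, hsupport⟩ := hs.exists_isSupport q
    refine hsupport.not_wbtw hne hne' ?_ ?_ <;>
      simp only [height_eq_of_value_eq hp, height_eq_of_value_eq hq, height_eq_of_value_eq hp',
        le_refl]
  rcases hcol.wbtw_or_wbtw_or_wbtw with h | h | h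
  · exact hnot h₁ h₂ h₃ h₁₂ h₂₃.symm h
  · exact hnot h₂ h₃ h₁ h₂₃ h₁₃ h
  · exact hnot h₃ h₁ h₂ h₁₃.symm h₁₂.symm h

theorem log_two_le_traceLength_x (hs : s.Admissible) : log 2 ≤ traceLength s.x :=
  log_le_traceLength one_le_two (by linarith [hs.three_le_x])

theorem add_position_lt_height (hs : s.Admissible) (w : List Turn) :
    ((position w).1 + (position w).2 : ℝ) < 2 * s.height w := by
  have hlog2 := log_two_gt_d9
  have hx := hs.log_two_le_traceLength_x
  have hy := hs.swap.log_two_le_traceLength_x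
  have hz : log (2 ^ 2) ≤ traceLength s.z :=
    log_le_traceLength (by norm_num) (by linarith [hs.six_le_z])
  rw [log_pow, Nat.cast_ofNat] at hz
  have h := hs.linearForm_lt_height (u := 1 / 2) (v := 1 / 2) (by linarith)
    (by change _ ≤ traceLength s.swap.x; linarith) (by linarith [hs.defect_le]) w
  unfold linearForm at h
  linarith

theorem linearForm_sub_height_lt (hs : s.Admissible) (w : List Turn) :
    linearForm (traceLength s.x) (traceLength s.y) w - s.height w <
      3 / 4 * s.defect * ((position w).1 + (position w).2) := by
  have hdefect := hs.defect_pos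
  have h := hs.linearForm_lt_height (u := traceLength s.x - 3 / 4 * s.defect)
    (v := traceLength s.y - 3 / 4 * s.defect) (by linarith) (by linarith)
    (by unfold defect; linarith) w
  unfold linearForm at *
  linarith

theorem abs_linearForm_sub_linearForm_le (hs : s.Admissible) (h₁ : s.value w₁ = r)
    (h₂ : s.value w₂ = r) :
    |linearForm (traceLength s.x) (traceLength s.y) w₁ -
      linearForm (traceLength s.x) (traceLength s.y) w₂| ≤ 3 / 2 * s.defect * traceLength r := by
  have hbounds : ∀ {w : List Turn}, s.value w = r →
      traceLength r ≤ linearForm (traceLength s.x) (traceLength s.y) w ∧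
      linearForm (traceLength s.x) (traceLength s.y) w ≤
        traceLength r + 3 / 2 * s.defect * traceLength r := by
    intro w hw
    have hlow := hs.height_le_linearForm le_rfl le_rfl w
    have hup := hs.linearForm_sub_height_lt w
    have hsize := mul_le_mul_of_nonneg_left (hs.add_position_lt_height w).le hs.defect_pos.le
    rw [height_eq_of_value_eq hw] at hlow hup hsize
    exact ⟨hlow, by linarith⟩
  rw [abs_le]
  constructor <;> linarith [hbounds h₁, hbounds h₂]

theorem abs_position_snd_sub_le (hs : s.Admissible) (h₁ : s.value w₁ = r) (h₂ : s.value w₂ = r) :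
    |((position w₁).2 - (position w₂).2 : ℝ)| ≤ 2 * traceLength r := by
  have hbounds : ∀ {w : List Turn}, s.value w = r →
      0 ≤ ((position w).2 : ℝ) ∧ ((position w).2 : ℝ) ≤ 2 * traceLength r := by
    intro w hw
    have hsize := hs.add_position_lt_height w
    rw [height_eq_of_value_eq hw] at hsize
    exact ⟨Nat.cast_nonneg _, by linarith [Nat.cast_nonneg (α := ℝ) (position w).1]⟩
  rw [abs_le]
  constructor <;> linarith [hbounds h₁, hbounds h₂]

theorem collinear_of_value_eq (hs : s.Admissible) (hr : 12 * traceLength r ≤ s.z)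
    (h₁ : s.value w₁ = r) (h₂ : s.value w₂ = r) (h₃ : s.value w₃ = r) :
    Collinear ℝ {positionVec w₁, positionVec w₂, positionVec w₃} := by
  /- The determinant below is an integer, so if it is nonzero then Cramer's rule bounds the trace
  length of `s.x` by `6 * s.defect * traceLength r ^ 2 ≤ 3 / 8`. -/
  by_contra hcol
  have hdet : ((position w₂).1 - (position w₁).1 : ℤ) * ((position w₃).2 - (position w₁).2) -
      ((position w₂).2 - (position w₁).2) * ((position w₃).1 - (position w₁).1) ≠ 0 :=
    fun h => hcol (collinear_of_det_eq_zero (by simp only [positionVec]; exact_mod_cast h))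
  have hcramer := abs_le_of_int_det_ne_zero hdet (u := traceLength s.x) (v := traceLength s.y)
    (δ := 3 / 2 * s.defect * traceLength r) (N := 2 * traceLength r)
    (by convert hs.abs_linearForm_sub_linearForm_le h₂ h₁ using 2
        simp only [linearForm]; push_cast; ring)
    (by convert hs.abs_linearForm_sub_linearForm_le h₃ h₁ using 2
        simp only [linearForm]; push_cast; ring)
    (by exact_mod_cast hs.abs_position_snd_sub_le h₂ h₁)
    (by exact_mod_cast hs.abs_position_snd_sub_le h₃ h₁)
  have hr₀ : 0 ≤ 12 * traceLength r := by
    linarith [(abs_nonneg _).trans (hs.abs_position_snd_sub_le h₂ h₁)]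
  have hsq := mul_le_mul_of_nonneg_left (pow_le_pow_left₀ hr₀ hr 2) hs.defect_pos.le
  linarith [le_abs_self (traceLength s.x), hs.defect_mul_z_sq_le, hs.log_two_le_traceLength_x,
    log_two_gt_d9]

theorem encard_value_eq_le_two (hs : s.Admissible) (hr : 12 * traceLength r ≤ s.z) :
    {w | s.value w = r}.encard ≤ 2 := by
  by_contra! hlt
  obtain ⟨t, hsub, hcard⟩ := exists_subset_encard_eq (Order.add_one_le_of_lt hlt)
  obtain ⟨w₁, w₂, w₃, h₁₂, h₁₃, h₂₃, rfl⟩ := encard_eq_three.1 (hcard.trans (by norm_num))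
  have h₁ : s.value w₁ = r := hsub (by simp)
  have h₂ : s.value w₂ = r := hsub (by simp)
  have h₃ : s.value w₃ = r := hsub (by simp)
  exact hs.not_collinear_of_value_eq h₁ h₂ h₃ h₁₂ h₁₃ h₂₃ (hs.collinear_of_value_eq hr h₁ h₂ h₃)

theorem encard_value_lt_le (hs : s.Admissible) {Y : ℝ} :
    {w | s.value w < Y}.encard ≤ (⌊2 * log Y⌋₊ ^ 2 : ℕ) := by
  set N := ⌊2 * log Y⌋₊
  have hmaps : position '' {w | s.value w < Y} ⊆ Icc 1 N ×ˢ Icc 1 N := by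
    rintro _ ⟨w, hw, rfl⟩
    have hpos := position_pos w
    have hvalue : 6 ≤ s.value w := (hs.descend w).six_le_z
    have hheight : s.height w ≤ log Y :=
      (traceLength_le_log (by linarith)).trans (log_le_log (by linarith) hw.le)
    have hsize : (position w).1 + (position w).2 ≤ N :=
      Nat.le_floor (by push_cast; linarith [hs.add_position_lt_height w])
    simp only [mem_prod, mem_Icc]
    omega
  calc {w | s.value w < Y}.encard
      = (position '' {w | s.value w < Y}).encard :=
        (position_injective.injOn.encard_image).symm
    _ ≤ (Icc 1 N ×ˢ Icc 1 N).encard := encard_le_encard hmaps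
    _ = (N ^ 2 : ℕ) := by
        rw [encard_prod, ← Finset.coe_Icc, encard_coe_eq_coe_finsetCard, Nat.card_Icc,
          Nat.add_sub_cancel, sq, Nat.cast_mul]

end Admissible

theorem Admissible.encard_value_eq_le (hs : s.Admissible) (r : ℝ) :
    {w | s.value w = r}.encard ≤ (3 * ⌊2 * log (12 * traceLength r)⌋₊ ^ 2 + 2 : ℕ) := by
  have hsubtree : ∀ p ∉ {w | s.value w < 12 * traceLength r},
      {w | p ++ w ∈ {w | s.value w = r}}.encard ≤ 2 := by
    intro p hp
    simp only [mem_ofPred_eq, value, descend_append]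
    exact (hs.descend p).encard_value_eq_le_two (not_lt.1 hp)
  calc {w | s.value w = r}.encard
      ≤ (2 + 1) * {w | s.value w < 12 * traceLength r}.encard + 2 :=
        encard_le_of_forall_prefix_notMem hsubtree
    _ ≤ (2 + 1) * (⌊2 * log (12 * traceLength r)⌋₊ ^ 2 : ℕ) + 2 := by
        gcongr; exact hs.encard_value_lt_le
    _ = _ := by push_cast; norm_num

/-- The cone of traces of a Markoff triple. -/
def ofTriple (t : ℕ × ℕ × ℕ) : MarkoffCone := ⟨3 * t.1, 3 * t.2.1, 3 * t.2.2⟩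

theorem ofTriple_injective : Function.Injective ofTriple := by
  rintro ⟨a, b, c⟩ ⟨a', b', c'⟩ h
  simpa [ofTriple] using h

theorem left_ofTriple {a b c d : ℕ} (h : c + d = 3 * a * b) :
    (ofTriple (a, d, b)).left = ofTriple (a, b, c) := by
  have h' : (c + d : ℝ) = 3 * a * b := by exact_mod_cast h
  simp only [ofTriple, left, mk.injEq, true_and]
  linear_combination -3 * h'

theorem right_ofTriple {a b c d : ℕ} (h : c + d = 3 * b * a) :
    (ofTriple (d, b, a)).right = ofTriple (a, b, c) := by
  have h' : (c + d : ℝ) = 3 * b * a := by exact_mod_cast h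
  simp only [ofTriple, right, mk.injEq, true_and]
  linear_combination -3 * h'

theorem admissible_ofTriple_one_one_two : (ofTriple (1, 1, 2)).Admissible := by
  constructor <;> norm_num [ofTriple]

end MarkoffCone

/-! ### Markoff triples -/

namespace IsMarkoffTriple

variable {a b c d : ℕ}

theorem swap (h : IsMarkoffTriple (a, b, c)) : IsMarkoffTriple (b, a, c) :=
  ⟨h.2.1, h.1, h.2.2.1, by simp only; linear_combination h.2.2.2⟩

theorem exists_vieta (h : IsMarkoffTriple (a, b, c)) :
    ∃ d, c + d = 3 * a * b ∧ IsMarkoffTriple (a, d, b) := by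
  obtain ⟨ha, hb, hc, heq⟩ := h
  simp only at ha hb hc heq
  have hle : c ≤ 3 * a * b := le_of_mul_le_mul_right (by nlinarith) hc
  obtain ⟨d, hd⟩ := Nat.exists_eq_add_of_le hle
  have hcd : c * d = a ^ 2 + b ^ 2 := by rw [hd] at heq; linarith
  refine ⟨d, hd.symm, ha, Nat.pos_of_ne_zero ?_, hb, ?_⟩
  · rintro rfl
    nlinarith
  · simp only
    linear_combination hcd.symm + d * hd.symm

theorem vieta_lt (h : IsMarkoffTriple (a, b, c)) (hab : a ≤ b) (hb : 2 ≤ b) (hbc : b ≤ c)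
    (hd : c + d = 3 * a * b) : d < b ∧ b < c := by
  obtain ⟨ha, -, -, heq⟩ := h
  simp only at ha heq
  zify at *
  have hprod : (0 : ℤ) < (c - b) * (b - d) := by
    have hcd : (c * d : ℤ) = a ^ 2 + b ^ 2 := by linear_combination c * hd - heq
    have hsq : (a ^ 2 + 2 * b ^ 2 : ℤ) < 3 * a * b ^ 2 := by nlinarith
    linear_combination hsq + hcd - b * hd
  have hbd := pos_of_mul_pos_right hprod (sub_nonneg.2 hbc)
  have hcb := pos_of_mul_pos_left hprod hbd.le
  exact ⟨sub_pos.1 hbd, sub_pos.1 hcb⟩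

theorem eq_two (h : IsMarkoffTriple (1, 1, c)) (hc : 2 ≤ c) : c = 2 := by
  have heq := h.2.2.2
  simp only at heq
  nlinarith

end IsMarkoffTriple

namespace MarkoffCone

theorem exists_descend_eq_ofTriple {a b c : ℕ} (h : IsMarkoffTriple (a, b, c)) (hac : a ≤ c)
    (hbc : b ≤ c) (hc : 2 ≤ c) :
    ∃ w, (ofTriple (1, 1, 2)).descend w = ofTriple (a, b, c) := by
  induction c using Nat.strong_induction_on generalizing a b with
  | _ c ih =>
  by_cases hab : 2 ≤ max a b
  swap
  · obtain ⟨rfl, rfl⟩ : a = 1 ∧ b = 1 := by have := h.1; have := h.2.1; simp only at *; omega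
    obtain rfl := h.eq_two hc
    exact ⟨[], rfl⟩
  rcases le_total a b with hle | hle
  · rw [max_eq_right hle] at hab
    obtain ⟨d, hd, hparent⟩ := h.exists_vieta
    obtain ⟨hdb, hbc⟩ := h.vieta_lt hle hab hbc hd
    obtain ⟨w, hw⟩ := ih b hbc hparent hle hdb.le hab
    exact ⟨w ++ [.left], by rw [descend_append, hw]; exact left_ofTriple hd⟩
  · rw [max_eq_left hle] at hab
    obtain ⟨d, hd, hparent⟩ := h.swap.exists_vieta
    obtain ⟨hda, hac⟩ := h.swap.vieta_lt hle hab hac hd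
    obtain ⟨w, hw⟩ := ih a hac hparent.swap hda.le hle hab
    exact ⟨w ++ [.right], by rw [descend_append, hw]; exact right_ofTriple hd⟩

end MarkoffCone

/-- The ordered Markoff triples with largest entry `m`. -/
def markoffFiber (m : ℕ) : Set (ℕ × ℕ × ℕ) :=
  {t | IsMarkoffTriple t ∧ t.1 ≤ t.2.1 ∧ t.2.1 ≤ t.2.2 ∧ t.2.2 = m}

theorem encard_markoffFiber_le {m : ℕ} (hm : 2 ≤ m) :
    (markoffFiber m).encard ≤ {w | (MarkoffCone.ofTriple (1, 1, 2)).value w = 3 * m}.encard := by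
  have hsub : MarkoffCone.ofTriple '' markoffFiber m ⊆
      (MarkoffCone.ofTriple (1, 1, 2)).descend ''
        {w | (MarkoffCone.ofTriple (1, 1, 2)).value w = 3 * m} := by
    rintro _ ⟨⟨a, b, c⟩, ⟨ht, hab, hbc, rfl⟩, rfl⟩
    obtain ⟨w, hw⟩ := MarkoffCone.exists_descend_eq_ofTriple ht (hab.trans hbc) hbc hm
    exact ⟨w, congrArg MarkoffCone.z hw, hw⟩
  rw [← MarkoffCone.ofTriple_injective.encard_image]
  exact (encard_le_encard hsub).trans (encard_image_le _ _)

theorem ncard_markoffFiber_le {m : ℕ} (hm : 2 ≤ m) :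
    ((markoffFiber m).ncard : ℝ) ≤ 12 * log (36 * log m) ^ 2 + 2 := by
  have hm' : (2 : ℝ) ≤ m := by exact_mod_cast hm
  have hcard := (encard_le_coe_iff_finite_ncard_le.1 ((encard_markoffFiber_le hm).trans
    (MarkoffCone.admissible_ofTriple_one_one_two.encard_value_eq_le _))).2
  set ℓ := traceLength (3 * m)
  have hlow : log 2 ≤ ℓ := log_le_traceLength one_le_two (by linarith)
  have hcube : (3 * m : ℝ) ≤ m ^ 3 := by
    have hsq : (3 : ℝ) ≤ m ^ 2 := by nlinarith
    rw [pow_succ]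
    gcongr
  have hup : ℓ ≤ 3 * log m := by
    calc ℓ ≤ log (3 * m) := traceLength_le_log (by linarith)
      _ ≤ log (m ^ 3) := log_le_log (by linarith) hcube
      _ = 3 * log m := by rw [log_pow, Nat.cast_ofNat]
  have hlog2 := log_two_gt_d9
  have hlog : 0 ≤ log (12 * ℓ) := log_nonneg (by linarith)
  calc ((markoffFiber m).ncard : ℝ) ≤ 3 * (⌊2 * log (12 * ℓ)⌋₊ : ℝ) ^ 2 + 2 := by
        exact_mod_cast hcard
    _ ≤ 3 * (2 * log (12 * ℓ)) ^ 2 + 2 := by gcongr; exact Nat.floor_le (by linarith)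
    _ ≤ 3 * (2 * log (36 * log m)) ^ 2 + 2 := by
        have hle := log_le_log (show 0 < 12 * ℓ by linarith)
          (show 12 * ℓ ≤ 36 * log m by linarith)
        gcongr
    _ = 12 * log (36 * log m) ^ 2 + 2 := by ring

/-- For every `ε > 0` there is a constant `C(ε) > 0` such that, for every `m ≥ 2`, the
number of Markoff triples `(a, b, c)` with `a ≤ b ≤ c` and largest entry `c = m` is at
most `C(ε) · (log m)^ε`. -/
theorem markoff_fiber_subpolynomial_bound :
    ∀ ε : ℝ, 0 < ε → ∃ C : ℝ, 0 < C ∧ ∀ m : ℕ, 2 ≤ m →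
      (Set.ncard {t : ℕ × ℕ × ℕ | IsMarkoffTriple t ∧ t.1 ≤ t.2.1 ∧ t.2.1 ≤ t.2.2 ∧
          t.2.2 = m} : ℝ)
        ≤ C * Real.log m ^ ε := by
  intro ε hε
  refine ⟨14 * (4 / ε ^ 2 * 36 ^ ε), by positivity, fun m hm => ?_⟩
  have hlog : log 2 ≤ log m := log_le_log two_pos (by exact_mod_cast hm)
  have hlog2 := log_two_gt_d9
  have hX : 1 ≤ log (36 * log m) := by
    rw [le_log_iff_exp_le (by linarith)]
    linarith [exp_one_lt_d9]
  calc ((markoffFiber m).ncard : ℝ) ≤ 12 * log (36 * log m) ^ 2 + 2 := ncard_markoffFiber_le hm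
    _ ≤ 14 * log (36 * log m) ^ 2 := by linarith [one_le_pow₀ hX (n := 2)]
    _ ≤ 14 * (4 / ε ^ 2 * (36 * log m) ^ ε) := by
        gcongr; exact log_sq_le_rpow_div (by linarith) hε
    _ = 14 * (4 / ε ^ 2 * 36 ^ ε) * log m ^ ε := by
        rw [mul_rpow (by norm_num) (by linarith)]; ring
end
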